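/- Fix an integer d ≥ 1, p ∈ (1,∞), a penalty function φ, and let (μ_t)_{t≥0} be a convolution semigroup in 𝒫_p(ℝ^d) with 𝒲_p(μ_t, δ_0) → 0 as t ↓ 0. Then the family (𝒮(t))_{t≥0} is a strongly continuous, convex, monotone, normalized contraction semigroup on C₀(ℝ^d): for every s,t ≥ 0 and f,g ∈ C₀(ℝ^d), (i) 𝒮(t) maps C₀(ℝ^d) to itself, 𝒮(t)0 = 0, f ≤ g implies 𝒮(t)f ≤ 𝒮(t)g, ‖𝒮(t)f − 𝒮(t)g‖_∞ ≤ ‖f−g‖_∞, and 𝒮(t)(λf + (1−λ)g) ≤ λ𝒮(t)f + (1−λ)𝒮(t)g pointwise for all λ ∈ [0,1]; (ii) 𝒮(0)f = f; (iii) 𝒮(t)(𝒮(s)f) = 𝒮(t+s)f; (iv) lim_{t↓0} ‖𝒮(t)f − f‖_∞ = 0. -/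

import Mathlib

open MeasureTheory Filter Topology ENNReal NNReal Set ZeroAtInfty
noncomputable section

/-- Euclidean space ℝ^d. -/
abbrev Ed (d : ℕ) := EuclideanSpace ℝ (Fin d)

/-- `𝒫_p(ℝ^d)`: Borel probability measures with finite `p`-th moment. -/
def MemPp {d : ℕ} (p : ℝ) (μ : Measure (Ed d)) : Prop :=
  IsProbabilityMeasure μ ∧ ∫⁻ x, (‖x‖₊ : ℝ≥0∞) ^ p ∂μ < ∞

/-- `γ` is a coupling of `μ` and `ν`. -/
def IsCoupling {d : ℕ} (γ : Measure (Ed d × Ed d)) (μ ν : Measure (Ed d)) : Prop :=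
  γ.map Prod.fst = μ ∧ γ.map Prod.snd = ν

/-- The `p`-Wasserstein distance `𝒲_p(μ, ν)`. -/
def Wp {d : ℕ} (p : ℝ) (μ ν : Measure (Ed d)) : ℝ :=
  (⨅ γ ∈ {γ : Measure (Ed d × Ed d) | IsCoupling γ μ ν},
    (∫⁻ q, (‖q.2 - q.1‖₊ : ℝ≥0∞) ^ p ∂γ) ^ (1 / p)).toReal

/-- The scaled penalty `φ_t(r) = t·φ(r/t)` for `t > 0`; `φ_0(0) = 0`, `φ_0(r) = ∞` for `r > 0`. -/
def phit (φ : ℝ≥0 → ℝ≥0∞) (t : ℝ) (r : ℝ≥0) : ℝ≥0∞ :=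
  if 0 < t then (t.toNNReal : ℝ≥0∞) * φ (r / t.toNNReal) else (if r = 0 then 0 else ∞)

/-- `φ` is a penalty function: lower semicontinuous, convex, increasing, not constant,
`φ(0) = 0`, and `x ↦ φ(x^{1/p})` is convex. -/
structure IsPenalty (p : ℝ) (φ : ℝ≥0 → ℝ≥0∞) : Prop where
  lsc : LowerSemicontinuous φ
  convex : ∀ a b l m : ℝ≥0, l + m = 1 →
    φ (l * a + m * b) ≤ (l : ℝ≥0∞) * φ a + (m : ℝ≥0∞) * φ b
  mono : Monotone φ
  not_const : ∃ a b, φ a ≠ φ b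
  map_zero : φ 0 = 0
  convex_rpow : ∀ a b l m : ℝ≥0, l + m = 1 →
    φ ((l * a + m * b) ^ (1 / p)) ≤ (l : ℝ≥0∞) * φ (a ^ (1 / p)) + (m : ℝ≥0∞) * φ (b ^ (1 / p))

/-- The convex conjugate `φ*(y) = sup_{x ≥ 0} (xy − φ(x))`. -/
def phiStar (φ : ℝ≥0 → ℝ≥0∞) (y : ℝ≥0) : ℝ≥0∞ :=
  ⨆ x : ℝ≥0, ((x * y : ℝ≥0) : ℝ≥0∞) - φ x

/-- The one-step operator `S(t)f(x) = sup_ν ( ∫ f(x+y) ν(dy) − φ_t(𝒲_p(μ_t, ν)) )`. -/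
def Sop {d : ℕ} (p : ℝ) (φ : ℝ≥0 → ℝ≥0∞) (μt : Measure (Ed d)) (t : ℝ)
    (f : Ed d → ℝ) (x : Ed d) : ℝ :=
  sSup { r : ℝ | ∃ ν : Measure (Ed d), MemPp p ν ∧ ∃ c : ℝ, 0 ≤ c ∧
    phit φ t (Wp p μt ν).toNNReal ≤ ENNReal.ofReal c ∧ r = (∫ y, f (x + y) ∂ν) - c }

/-- The iterated operator `𝒮ⁿ(t) = S(2⁻ⁿ)^{∘ k} ∘ S(t − k·2⁻ⁿ)`, `k = ⌊2ⁿ t⌋`. -/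
def SiterN {d : ℕ} (p : ℝ) (φ : ℝ≥0 → ℝ≥0∞) (μ : ℝ → Measure (Ed d)) (n : ℕ) (t : ℝ)
    (f : Ed d → ℝ) : Ed d → ℝ :=
  (fun g => Sop p φ (μ ((2 : ℝ) ^ n)⁻¹) ((2 : ℝ) ^ n)⁻¹ g)^[⌊(2:ℝ)^n * t⌋₊]
    (Sop p φ (μ (t - ⌊(2:ℝ)^n * t⌋₊ * ((2:ℝ)^n)⁻¹)) (t - ⌊(2:ℝ)^n * t⌋₊ * ((2:ℝ)^n)⁻¹) f)

/-- The limiting operator `𝒮(t)f = lim_n 𝒮ⁿ(t)f` (a decreasing limit, i.e. an infimum). -/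
def Slim {d : ℕ} (p : ℝ) (φ : ℝ≥0 → ℝ≥0∞) (μ : ℝ → Measure (Ed d)) (t : ℝ)
    (f : Ed d → ℝ) (x : Ed d) : ℝ :=
  ⨅ n : ℕ, SiterN p φ μ n t f x

/-- `f ∈ C₀(ℝ^d)`: continuous and vanishing at infinity. -/
def IsC0 {d : ℕ} (f : Ed d → ℝ) : Prop :=
  Continuous f ∧ Tendsto f (cocompact (Ed d)) (𝓝 0)

/-- `(μ_t)_{t ≥ 0}` is a convolution semigroup in `𝒫_p(ℝ^d)`. -/
def IsConvSemigroup {d : ℕ} (p : ℝ) (μ : ℝ → Measure (Ed d)) : Prop :=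
  μ 0 = Measure.dirac 0 ∧ (∀ s t : ℝ, 0 ≤ s → 0 ≤ t → μ (s + t) = (μ s).conv (μ t)) ∧
    ∀ t : ℝ, 0 ≤ t → MemPp p (μ t)

/-- `𝒲_p(μ_t, δ_0) → 0` as `t ↓ 0`. -/
def WContinuousAtZero {d : ℕ} (p : ℝ) (μ : ℝ → Measure (Ed d)) : Prop :=
  Tendsto (fun t => Wp p (μ t) (Measure.dirac 0)) (𝓝[>] (0:ℝ)) (𝓝 0)

/-- The semigroup of the underlying Lévy process, `S^μ(t)f(x) = ∫ f(x+y) μ_t(dy)`. -/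
def Smu {d : ℕ} (μ : ℝ → Measure (Ed d)) (t : ℝ) (f : Ed d → ℝ) (x : Ed d) : ℝ :=
  ∫ y, f (x + y) ∂(μ t)

/-- `f ∈ D(A^μ)` with `A^μ f = Af`: `(S^μ(t)f − f)/t → Af` uniformly as `t ↓ 0`. -/
def HasGenerator {d : ℕ} (μ : ℝ → Measure (Ed d)) (f Af : Ed d → ℝ) : Prop :=
  TendstoUniformly (fun t x => (Smu μ t f x - f x) / t) Af (𝓝[>] (0:ℝ))

/-- `f ∈ C₀¹(ℝ^d)`: continuously differentiable, vanishing at infinity, with gradient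
vanishing at infinity. -/
def IsC01 {d : ℕ} (f : Ed d → ℝ) : Prop :=
  IsC0 f ∧ ContDiff ℝ 1 f ∧ Tendsto (fun x => gradient f x) (cocompact (Ed d)) (𝓝 0)

/-!
Gluing a measurable choice of near-optimal measures for the time step `t` onto a measure for the
time step `s` produces a competitor for the time step `s + t`. Its transport cost is controlled by
Minkowski's inequality and its penalty by Jensen's inequality for `x ↦ φ(x^{1/p})`, so
`S(s) S(t) f ≤ S(s + t) f` and the dyadic iterates decrease to `𝒮(t) f`. Each `S(t)` is a
translation-invariant convex expectation: it preserves moduli of continuity, and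
`-𝒮(t)(-f) ≤ 𝒮(t) f` converts the upper bounds for `S(t) f` at infinity and at small times into
two-sided bounds for the limit. By Dini's theorem the convergence is uniform on `C₀`. Hence the
semigroup law holds for dyadic times, and it extends to all times by strong continuity.
-/

/-! ### Bounded uniformly continuous functions -/

/-- Bounded uniformly continuous real functions, the common domain of all operators below: it
contains `C₀` and, unlike `C₀`, it contains the constants. -/
structure IsBUC {X : Type*} [UniformSpace X] (f : X → ℝ) : Prop where
  uniformContinuous : UniformContinuous f
  bounded : ∃ M, ∀ x, |f x| ≤ M

namespace IsBUC

section UniformSpace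

variable {X : Type*} [UniformSpace X] {f g : X → ℝ}

lemma continuous (hf : IsBUC f) : Continuous f :=
  hf.uniformContinuous.continuous

lemma const (a : ℝ) : IsBUC (fun _ : X => a) :=
  ⟨uniformContinuous_const, |a|, fun _ => le_rfl⟩

lemma add (hf : IsBUC f) (hg : IsBUC g) : IsBUC (fun x => f x + g x) := by
  obtain ⟨M, hM⟩ := hf.bounded
  obtain ⟨N, hN⟩ := hg.bounded
  exact ⟨hf.uniformContinuous.add hg.uniformContinuous, M + N,
    fun x => (abs_add_le _ _).trans (add_le_add (hM x) (hN x))⟩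

lemma const_mul (hf : IsBUC f) (a : ℝ) : IsBUC (fun x => a * f x) := by
  obtain ⟨M, hM⟩ := hf.bounded
  refine ⟨hf.uniformContinuous.const_mul' a, |a| * M, fun x => ?_⟩
  rw [abs_mul]
  gcongr
  exact hM x

lemma neg (hf : IsBUC f) : IsBUC (fun x => -f x) := by
  simpa only [neg_one_mul] using hf.const_mul (-1)

lemma convexCombination (hf : IsBUC f) (hg : IsBUC g) (l : ℝ) :
    IsBUC (fun x => l * f x + (1 - l) * g x) :=
  (hf.const_mul l).add (hg.const_mul (1 - l))

lemma of_zeroAtInfty (f : C₀(X, ℝ)) : IsBUC f :=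
  ⟨ZeroAtInftyContinuousMap.uniformContinuous f, ‖f‖, fun x => f.toBCF.norm_coe_le_norm x⟩

end UniformSpace

variable {E : Type*} [NormedAddCommGroup E] {f : E → ℝ}

lemma comp_add_right (hf : IsBUC f) (h : E) : IsBUC (fun x => f (x + h)) := by
  obtain ⟨M, hM⟩ := hf.bounded
  exact ⟨hf.uniformContinuous.comp (uniformContinuous_id.add uniformContinuous_const),
    M, fun x => hM _⟩

lemma exists_modulus (hf : IsBUC f) {ε : ℝ} (hε : 0 < ε) :
    ∃ δ > 0, ∀ x y, ‖y - x‖ < δ → |f y - f x| ≤ ε := by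
  obtain ⟨δ, hδ, h⟩ := Metric.uniformContinuous_iff.1 hf.uniformContinuous ε hε
  refine ⟨δ, hδ, fun x y hxy => ?_⟩
  rw [← dist_eq_norm] at hxy
  exact (h hxy).le

lemma exists_le_add_norm_sub_rpow (hf : IsBUC f) {p ε : ℝ} (hp : 0 ≤ p) (hε : 0 < ε) :
    ∃ K, 0 ≤ K ∧ ∀ x y, f y ≤ f x + ε + K * ‖y - x‖ ^ p := by
  obtain ⟨M, hM⟩ := hf.bounded
  obtain ⟨δ, hδ, hmod⟩ := hf.exists_modulus hε
  have hM₀ : 0 ≤ M := (abs_nonneg _).trans (hM 0)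
  refine ⟨2 * M / δ ^ p, by positivity, fun x y => ?_⟩
  rcases lt_or_ge ‖y - x‖ δ with hxy | hxy
  · have hK : 0 ≤ 2 * M / δ ^ p * ‖y - x‖ ^ p := by positivity
    linarith [le_of_abs_le (hmod x y hxy)]
  · have hK : 2 * M ≤ 2 * M / δ ^ p * ‖y - x‖ ^ p := by
      rw [div_mul_eq_mul_div, le_div_iff₀ (by positivity)]
      gcongr
    linarith [le_of_abs_le (hM y), neg_le_of_abs_le (hM x)]

lemma integrable_comp_add [MeasurableSpace E] [OpensMeasurableSpace E] (hf : IsBUC f)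
    (ν : Measure E) [IsFiniteMeasure ν] (x : E) : Integrable (fun y => f (x + y)) ν := by
  obtain ⟨M, hM⟩ := hf.bounded
  have hcont : Continuous (fun y => f (x + y)) := hf.continuous.comp (continuous_const_add x)
  exact Integrable.of_bound hcont.aestronglyMeasurable M (Eventually.of_forall fun y => hM _)

end IsBUC

/-! ### Translation-invariant convex expectations -/

/-- A convex expectation commuting with translations: a monotone, cash-subadditive, normalized and
convex operator on bounded uniformly continuous functions. Monotonicity and `T (f + c) ≤ T f + c`
are combined in the single field `le_add_const`. -/
structure IsConvexExpectation {E : Type*} [NormedAddCommGroup E] (T : (E → ℝ) → E → ℝ) :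
    Prop where
  le_add_const : ∀ {f g : E → ℝ} {c : ℝ}, IsBUC f → IsBUC g → (∀ x, f x ≤ g x + c) →
    ∀ x, T f x ≤ T g x + c
  map_zero : T (fun _ => 0) = fun _ => 0
  map_translate : ∀ {f : E → ℝ}, IsBUC f → ∀ h, T (fun x => f (x + h)) = fun x => T f (x + h)
  convex : ∀ {f g : E → ℝ}, IsBUC f → IsBUC g → ∀ {l : ℝ}, 0 ≤ l → l ≤ 1 → ∀ x,
    T (fun y => l * f y + (1 - l) * g y) x ≤ l * T f x + (1 - l) * T g x

namespace IsConvexExpectation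

variable {E : Type*} [NormedAddCommGroup E] {T U : (E → ℝ) → E → ℝ} {f g : E → ℝ}

lemma mono (hT : IsConvexExpectation T) (hf : IsBUC f) (hg : IsBUC g) (h : ∀ x, f x ≤ g x)
    (x : E) : T f x ≤ T g x := by
  simpa only [add_zero] using hT.le_add_const (c := 0) hf hg (by simpa only [add_zero] using h) x

lemma abs_sub_le (hT : IsConvexExpectation T) (hf : IsBUC f) (hg : IsBUC g) {c : ℝ}
    (h : ∀ x, |f x - g x| ≤ c) (x : E) : |T f x - T g x| ≤ c := by
  have hfg := hT.le_add_const (c := c) hf hg (fun y => by linarith [(abs_le.1 (h y)).2]) x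
  have hgf := hT.le_add_const (c := c) hg hf (fun y => by linarith [(abs_le.1 (h y)).1]) x
  exact abs_sub_le_iff.2 ⟨by linarith, by linarith⟩

lemma abs_le (hT : IsConvexExpectation T) (hf : IsBUC f) {M : ℝ} (h : ∀ x, |f x| ≤ M) (x : E) :
    |T f x| ≤ M := by
  simpa only [hT.map_zero, sub_zero] using
    hT.abs_sub_le hf (IsBUC.const 0) (by simpa only [sub_zero] using h) x

lemma abs_map_sub_le (hT : IsConvexExpectation T) (hf : IsBUC f) {δ ε : ℝ}
    (h : ∀ x y, ‖y - x‖ < δ → |f y - f x| ≤ ε) {x y : E} (hxy : ‖y - x‖ < δ) :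
    |T f y - T f x| ≤ ε := by
  have hshift := hT.abs_sub_le (hf.comp_add_right (y - x)) hf
    (fun z => h z _ (by rwa [add_sub_cancel_left])) x
  rw [hT.map_translate hf] at hshift
  simpa only [add_sub_cancel] using hshift

lemma isBUC (hT : IsConvexExpectation T) (hf : IsBUC f) : IsBUC (T f) := by
  obtain ⟨M, hM⟩ := hf.bounded
  refine ⟨Metric.uniformContinuous_iff.2 fun ε hε => ?_, M, hT.abs_le hf hM⟩
  obtain ⟨δ, hδ, hmod⟩ := hf.exists_modulus (half_pos hε)
  refine ⟨δ, hδ, fun {y x} hyx => ?_⟩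
  rw [dist_eq_norm] at hyx
  exact (hT.abs_map_sub_le hf hmod hyx).trans_lt (half_lt_self hε)

-- Convexity at the midpoint of `f` and `-f`, together with `T 0 = 0`.
lemma neg_map_neg_le (hT : IsConvexExpectation T) (hf : IsBUC f) (x : E) :
    -T (fun y => -f y) x ≤ T f x := by
  have hmid := hT.convex hf hf.neg (l := 1 / 2) (by norm_num) (by norm_num) x
  have hzero : (fun y => 1 / 2 * f y + (1 - 1 / 2) * -f y) = fun _ => 0 := by
    ext y
    ring
  rw [hzero, congrFun hT.map_zero x] at hmid
  linarith

lemma comp (hT : IsConvexExpectation T) (hU : IsConvexExpectation U) :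
    IsConvexExpectation (T ∘ U) where
  le_add_const hf hg h := hT.le_add_const (hU.isBUC hf) (hU.isBUC hg) (hU.le_add_const hf hg h)
  map_zero := by rw [Function.comp_apply, hU.map_zero, hT.map_zero]
  map_translate hf h := by
    rw [Function.comp_apply, hU.map_translate hf, hT.map_translate (hU.isBUC hf)]
    rfl
  convex {_ _} hf hg {l} hl₀ hl₁ x :=
    (hT.mono (hU.isBUC (hf.convexCombination hg l))
      ((hU.isBUC hf).convexCombination (hU.isBUC hg) l) (hU.convex hf hg hl₀ hl₁) x).trans
      (hT.convex (hU.isBUC hf) (hU.isBUC hg) hl₀ hl₁ x)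

lemma iterate (hT : IsConvexExpectation T) (k : ℕ) : IsConvexExpectation T^[k] := by
  induction k with
  | zero => exact ⟨fun _ _ h => h, rfl, fun _ _ => rfl, fun _ _ _ _ _ _ => le_rfl⟩
  | succ k ih =>
    rw [Function.iterate_succ']
    exact hT.comp ih

lemma of_tendsto {ι : Type*} {l : Filter ι} [l.NeBot] {F : ι → (E → ℝ) → E → ℝ}
    (hF : ∀ i, IsConvexExpectation (F i))
    (h : ∀ {f}, IsBUC f → ∀ x, Tendsto (fun i => F i f x) l (𝓝 (T f x))) :
    IsConvexExpectation T where
  le_add_const {_ _ c} hf hg hfg x :=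
    le_of_tendsto_of_tendsto' (h hf x) ((h hg x).add_const c)
      fun i => (hF i).le_add_const hf hg hfg x
  map_zero := by
    ext x
    refine tendsto_nhds_unique (h (IsBUC.const 0) x) ?_
    simp only [(hF _).map_zero, tendsto_const_nhds]
  map_translate hf k := by
    ext x
    refine tendsto_nhds_unique (h (hf.comp_add_right k) x) ?_
    simpa only [(hF _).map_translate hf] using h hf (x + k)
  convex {_ _} hf hg {a} ha₀ ha₁ x :=
    le_of_tendsto_of_tendsto' (h (hf.convexCombination hg a) x)
      (((h hf x).const_mul a).add ((h hg x).const_mul (1 - a)))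
      fun i => (hF i).convex hf hg ha₀ ha₁ x

lemma of_integral [MeasurableSpace E] [OpensMeasurableSpace E] (ν : Measure E)
    [IsProbabilityMeasure ν] : IsConvexExpectation fun f x => ∫ y, f (x + y) ∂ν where
  le_add_const {f g c} hf hg h x := by
    calc ∫ y, f (x + y) ∂ν ≤ ∫ y, (g (x + y) + c) ∂ν :=
          integral_mono (hf.integrable_comp_add ν x)
            ((hg.integrable_comp_add ν x).add (integrable_const c)) fun y => h _
      _ = (∫ y, g (x + y) ∂ν) + c := by
          rw [integral_add (hg.integrable_comp_add ν x) (integrable_const c), integral_const,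
            probReal_univ, one_smul]
  map_zero := by simp only [integral_zero]
  map_translate {f} _ h := by simp only [add_right_comm]
  convex {f g} hf hg {l} _ _ x := by
    rw [integral_add ((hf.integrable_comp_add ν x).const_mul l)
      ((hg.integrable_comp_add ν x).const_mul (1 - l)), integral_const_mul, integral_const_mul]

end IsConvexExpectation

/-! ### Dini's theorem for functions vanishing at infinity -/

lemma tendstoUniformly_of_antitone_of_tendsto_cocompact {X : Type*} [TopologicalSpace X]
    {F : ℕ → X → ℝ} {f : X → ℝ} (hF : ∀ n, Continuous (F n)) (hf : Continuous f)
    (hanti : ∀ x, Antitone fun n => F n x) (hlim : ∀ x, Tendsto (fun n => F n x) atTop (𝓝 (f x)))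
    (hF₀ : Tendsto (F 0) (cocompact X) (𝓝 0)) (hf₀ : Tendsto f (cocompact X) (𝓝 0)) :
    TendstoUniformly F f atTop := by
  refine Metric.tendstoUniformly_iff.2 fun ε hε => ?_
  have hε' : 0 < ε / 2 := half_pos hε
  have hsmall : ∀ᶠ x in cocompact X, F 0 x < ε / 2 ∧ -(ε / 2) < f x :=
    (hF₀.eventually_lt_const hε').and (hf₀.eventually_const_lt (neg_lt_zero.2 hε'))
  obtain ⟨K, hK, hKc⟩ := mem_cocompact.1 hsmall
  have hunif : TendstoUniformlyOn F f atTop K :=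
    Antitone.tendstoUniformlyOn_of_forall_tendsto hK (fun n => (hF n).continuousOn)
      (fun x _ => hanti x) hf.continuousOn fun x _ => hlim x
  filter_upwards [Metric.tendstoUniformlyOn_iff.1 hunif ε hε] with n hn x
  by_cases hx : x ∈ K
  · exact hn x hx
  · obtain ⟨hx₀, hxf⟩ : F 0 x < ε / 2 ∧ -(ε / 2) < f x := hKc hx
    have hfn : f x ≤ F n x := (hanti x).le_of_tendsto (hlim x) n
    have hn0 : F n x ≤ F 0 x := hanti x n.zero_le
    rw [dist_comm, Real.dist_eq, abs_of_nonneg (sub_nonneg.2 hfn)]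
    linarith

/-! ### Dyadic iteration of a family of convex expectations -/

/-- The dyadic Chernoff product `A(2⁻ⁿ)^k ∘ A(t - k 2⁻ⁿ)` with `k = ⌊2ⁿ t⌋`. -/
def dyadicIterate {E : Type*} (A : ℝ → (E → ℝ) → E → ℝ) (n : ℕ) (t : ℝ) (f : E → ℝ) : E → ℝ :=
  (A ((2 : ℝ) ^ n)⁻¹)^[⌊(2 : ℝ) ^ n * t⌋₊] (A (t - ⌊(2 : ℝ) ^ n * t⌋₊ * ((2 : ℝ) ^ n)⁻¹) f)

/-- The limit of the dyadic Chernoff products. It is encoded as an infimum because the products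
decrease in `n` for the families considered here. -/
def dyadicLimit {E : Type*} (A : ℝ → (E → ℝ) → E → ℝ) (t : ℝ) (f : E → ℝ) (x : E) : ℝ :=
  ⨅ n, dyadicIterate A n t f x

/-- A family of convex expectations that is submultiplicative in time, preserves vanishing at
infinity and is upper semicontinuous at time zero. These are the properties of the one-step
operators that make their dyadic iteration converge to a strongly continuous semigroup. -/
structure IsChernoffFamily {E : Type*} [NormedAddCommGroup E] (A : ℝ → (E → ℝ) → E → ℝ) :
    Prop where
  isConvexExpectation : ∀ {t}, 0 ≤ t → IsConvexExpectation (A t)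
  zero_apply : ∀ {f}, IsBUC f → A 0 f = f
  comp_le : ∀ {s t f}, 0 ≤ s → 0 ≤ t → IsBUC f → ∀ x, A s (A t f) x ≤ A (s + t) f x
  tendsto_cocompact : ∀ {t f}, 0 ≤ t → IsBUC f → Tendsto f (cocompact E) (𝓝 0) →
    Tendsto (A t f) (cocompact E) (𝓝 0)
  eventually_le_add : ∀ {f ε}, IsBUC f → 0 < ε → ∀ᶠ t in 𝓝[>] 0, ∀ x, A t f x ≤ f x + ε

lemma exists_natCast_mul_add {h t : ℝ} (hh : 0 < h) (ht : 0 ≤ t) :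
    ∃ (j : ℕ) (r : ℝ), 0 ≤ r ∧ r < h ∧ t = j * h + r := by
  refine ⟨⌊t / h⌋₊, t - ⌊t / h⌋₊ * h, ?_, ?_, by ring⟩
  · exact sub_nonneg.2 ((le_div_iff₀ hh).1 (Nat.floor_le (by positivity)))
  · have := (div_lt_iff₀ hh).1 (Nat.lt_floor_add_one (t / h))
    linarith

lemma exists_two_pow_inv_lt {δ : ℝ} (hδ : 0 < δ) : ∃ n : ℕ, ((2 : ℝ) ^ n)⁻¹ < δ := by
  obtain ⟨n, hn⟩ := exists_pow_lt_of_lt_one hδ (by norm_num : (2 : ℝ)⁻¹ < 1)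
  exact ⟨n, by rwa [← inv_pow]⟩

lemma dyadicIterate_natCast_mul_add {E : Type*} (A : ℝ → (E → ℝ) → E → ℝ) (n j : ℕ) {r : ℝ}
    (hr : 0 ≤ r) (hrn : r < ((2 : ℝ) ^ n)⁻¹) (f : E → ℝ) :
    dyadicIterate A n (j * ((2 : ℝ) ^ n)⁻¹ + r) f = (A ((2 : ℝ) ^ n)⁻¹)^[j] (A r f) := by
  have htwo : (0 : ℝ) < 2 ^ n := by positivity
  have hfloor : ⌊(2 : ℝ) ^ n * (j * ((2 : ℝ) ^ n)⁻¹ + r)⌋₊ = j := by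
    rw [show (2 : ℝ) ^ n * (j * ((2 : ℝ) ^ n)⁻¹ + r) = j + 2 ^ n * r by field_simp,
      Nat.floor_eq_iff (by positivity)]
    have hlt : (2 : ℝ) ^ n * r < 1 := by
      rwa [← one_div, lt_div_iff₀' htwo] at hrn
    exact ⟨le_add_of_nonneg_right (by positivity), by linarith⟩
  rw [dyadicIterate, hfloor, add_sub_cancel_left]

namespace IsChernoffFamily

variable {E : Type*} [NormedAddCommGroup E] {A : ℝ → (E → ℝ) → E → ℝ} {f : E → ℝ} {s t : ℝ}

lemma isConvexExpectation_dyadicIterate (hA : IsChernoffFamily A) (n : ℕ) (ht : 0 ≤ t) :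
    IsConvexExpectation (dyadicIterate A n t) := by
  obtain ⟨j, r, hr, hrn, rfl⟩ := exists_natCast_mul_add (h := ((2 : ℝ) ^ n)⁻¹) (by positivity) ht
  rw [funext (dyadicIterate_natCast_mul_add A n j hr hrn)]
  exact ((hA.isConvexExpectation (by positivity)).iterate j).comp (hA.isConvexExpectation hr)

lemma dyadicIterate_natCast_mul (hA : IsChernoffFamily A) (n j : ℕ) (hf : IsBUC f) :
    dyadicIterate A n (j * ((2 : ℝ) ^ n)⁻¹) f = (A ((2 : ℝ) ^ n)⁻¹)^[j] f := by
  simpa only [add_zero, hA.zero_apply hf] using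
    dyadicIterate_natCast_mul_add A n j le_rfl (by positivity) f

lemma dyadicIterate_add (hA : IsChernoffFamily A) (n j : ℕ) (hs : 0 ≤ s) (hf : IsBUC f) :
    dyadicIterate A n (j * ((2 : ℝ) ^ n)⁻¹ + s) f =
      dyadicIterate A n (j * ((2 : ℝ) ^ n)⁻¹) (dyadicIterate A n s f) := by
  rw [hA.dyadicIterate_natCast_mul n j ((hA.isConvexExpectation_dyadicIterate n hs).isBUC hf)]
  obtain ⟨i, r, hr, hrn, rfl⟩ := exists_natCast_mul_add (h := ((2 : ℝ) ^ n)⁻¹) (by positivity) hs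
  rw [dyadicIterate_natCast_mul_add A n i hr hrn, ← Function.iterate_add_apply,
    ← dyadicIterate_natCast_mul_add A n (j + i) hr hrn]
  push_cast
  ring_nf

lemma tendsto_cocompact_dyadicIterate (hA : IsChernoffFamily A) (n : ℕ) (ht : 0 ≤ t)
    (hf : IsBUC f) (hf₀ : Tendsto f (cocompact E) (𝓝 0)) :
    Tendsto (dyadicIterate A n t f) (cocompact E) (𝓝 0) := by
  obtain ⟨j, r, hr, hrn, rfl⟩ := exists_natCast_mul_add (h := ((2 : ℝ) ^ n)⁻¹) (by positivity) ht
  rw [dyadicIterate_natCast_mul_add A n j hr hrn]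
  have hstep : 0 ≤ ((2 : ℝ) ^ n)⁻¹ := by positivity
  induction j with
  | zero => exact hA.tendsto_cocompact hr hf hf₀
  | succ j ih =>
    rw [Function.iterate_succ_apply']
    exact hA.tendsto_cocompact hstep (((hA.isConvexExpectation hstep).iterate j).isBUC
      ((hA.isConvexExpectation hr).isBUC hf)) (ih (by positivity))

lemma iterate_two_mul_le (hA : IsChernoffFamily A) (ht : 0 ≤ t) (j : ℕ) (hf : IsBUC f) (x : E) :
    (A t)^[2 * j] f x ≤ (A (2 * t))^[j] f x := by
  have hT := hA.isConvexExpectation ht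
  have hT₂ : IsConvexExpectation (A (2 * t)) := hA.isConvexExpectation (by positivity)
  induction j generalizing x with
  | zero => exact le_rfl
  | succ j ih =>
    have hj : IsBUC ((A t)^[2 * j] f) := (hT.iterate _).isBUC hf
    rw [mul_add_one, Function.iterate_succ_apply', Function.iterate_succ_apply',
      Function.iterate_succ_apply']
    calc A t (A t ((A t)^[2 * j] f)) x ≤ A (2 * t) ((A t)^[2 * j] f) x := by
          simpa only [← two_mul] using hA.comp_le ht ht hj x
      _ ≤ A (2 * t) ((A (2 * t))^[j] f) x := hT₂.mono hj ((hT₂.iterate j).isBUC hf) ih x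

lemma dyadicIterate_succ_le (hA : IsChernoffFamily A) (n : ℕ) (ht : 0 ≤ t) (hf : IsBUC f)
    (x : E) : dyadicIterate A (n + 1) t f x ≤ dyadicIterate A n t f x := by
  obtain ⟨j, r, hr, hrn, rfl⟩ := exists_natCast_mul_add (h := ((2 : ℝ) ^ n)⁻¹) (by positivity) ht
  rw [dyadicIterate_natCast_mul_add A n j hr hrn]
  have hhalf : ((2 : ℝ) ^ n)⁻¹ = 2 * ((2 : ℝ) ^ (n + 1))⁻¹ := by
    rw [pow_succ]
    field_simp
  rw [hhalf] at hrn ⊢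
  have hh : 0 ≤ ((2 : ℝ) ^ (n + 1))⁻¹ := by positivity
  have hTh := (hA.isConvexExpectation hh).iterate (2 * j)
  have hTr : IsBUC (A r f) := (hA.isConvexExpectation hr).isBUC hf
  refine le_trans ?_ (hA.iterate_two_mul_le hh j hTr x)
  rcases lt_or_ge r ((2 : ℝ) ^ (n + 1))⁻¹ with hlt | hge
  · have htime : (j : ℝ) * (2 * ((2 : ℝ) ^ (n + 1))⁻¹) + r =
        ((2 * j : ℕ) : ℝ) * ((2 : ℝ) ^ (n + 1))⁻¹ + r := by
      push_cast
      ring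
    rw [htime, dyadicIterate_natCast_mul_add A _ _ hr hlt]
  · obtain ⟨q, rfl⟩ : ∃ q, r = ((2 : ℝ) ^ (n + 1))⁻¹ + q := ⟨_, (add_sub_cancel _ r).symm⟩
    have hq : 0 ≤ q := by linarith
    have htime : (j : ℝ) * (2 * ((2 : ℝ) ^ (n + 1))⁻¹) + (((2 : ℝ) ^ (n + 1))⁻¹ + q) =
        ((2 * j + 1 : ℕ) : ℝ) * ((2 : ℝ) ^ (n + 1))⁻¹ + q := by
      push_cast
      ring
    rw [htime, dyadicIterate_natCast_mul_add A _ _ hq (by linarith), Function.iterate_succ_apply]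
    exact hTh.mono ((hA.isConvexExpectation hh).isBUC ((hA.isConvexExpectation hq).isBUC hf)) hTr
      (hA.comp_le hh hq hf) x

lemma antitone_dyadicIterate (hA : IsChernoffFamily A) (ht : 0 ≤ t) (hf : IsBUC f) (x : E) :
    Antitone fun n => dyadicIterate A n t f x :=
  antitone_nat_of_succ_le fun n => hA.dyadicIterate_succ_le n ht hf x

lemma bddBelow_range_dyadicIterate (hA : IsChernoffFamily A) (ht : 0 ≤ t) (hf : IsBUC f) (x : E) :
    BddBelow (range fun n => dyadicIterate A n t f x) := by
  obtain ⟨M, hM⟩ := hf.bounded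
  refine ⟨-M, ?_⟩
  rintro _ ⟨n, rfl⟩
  exact (abs_le.1 ((hA.isConvexExpectation_dyadicIterate n ht).abs_le hf hM x)).1

lemma tendsto_dyadicIterate (hA : IsChernoffFamily A) (ht : 0 ≤ t) (hf : IsBUC f) (x : E) :
    Tendsto (fun n => dyadicIterate A n t f x) atTop (𝓝 (dyadicLimit A t f x)) :=
  tendsto_atTop_ciInf (hA.antitone_dyadicIterate ht hf x) (hA.bddBelow_range_dyadicIterate ht hf x)

lemma dyadicLimit_le (hA : IsChernoffFamily A) (ht : 0 ≤ t) (hf : IsBUC f) (n : ℕ) (x : E) :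
    dyadicLimit A t f x ≤ dyadicIterate A n t f x :=
  ciInf_le (hA.bddBelow_range_dyadicIterate ht hf x) n

lemma isConvexExpectation_dyadicLimit (hA : IsChernoffFamily A) (ht : 0 ≤ t) :
    IsConvexExpectation (dyadicLimit A t) :=
  .of_tendsto (fun n => hA.isConvexExpectation_dyadicIterate n ht)
    fun hf x => hA.tendsto_dyadicIterate ht hf x

lemma neg_dyadicIterate_neg_le (hA : IsChernoffFamily A) (ht : 0 ≤ t) (hf : IsBUC f) (n : ℕ)
    (x : E) : -dyadicIterate A n t (fun y => -f y) x ≤ dyadicLimit A t f x :=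
  (neg_le_neg (hA.dyadicLimit_le ht hf.neg n x)).trans
    ((hA.isConvexExpectation_dyadicLimit ht).neg_map_neg_le hf x)

lemma tendsto_cocompact_dyadicLimit (hA : IsChernoffFamily A) (ht : 0 ≤ t) (hf : IsBUC f)
    (hf₀ : Tendsto f (cocompact E) (𝓝 0)) :
    Tendsto (dyadicLimit A t f) (cocompact E) (𝓝 0) := by
  have hneg₀ : Tendsto (fun x => -f x) (cocompact E) (𝓝 0) := by simpa only [neg_zero] using hf₀.neg
  have hlower := (hA.tendsto_cocompact_dyadicIterate 0 ht hf.neg hneg₀).neg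
  rw [neg_zero] at hlower
  exact tendsto_of_tendsto_of_tendsto_of_le_of_le hlower
    (hA.tendsto_cocompact_dyadicIterate 0 ht hf hf₀) (hA.neg_dyadicIterate_neg_le ht hf 0)
    (hA.dyadicLimit_le ht hf 0)

lemma tendstoUniformly_dyadicIterate (hA : IsChernoffFamily A) (ht : 0 ≤ t) (hf : IsBUC f)
    (hf₀ : Tendsto f (cocompact E) (𝓝 0)) :
    TendstoUniformly (fun n => dyadicIterate A n t f) (dyadicLimit A t f) atTop :=
  tendstoUniformly_of_antitone_of_tendsto_cocompact
    (fun n => ((hA.isConvexExpectation_dyadicIterate n ht).isBUC hf).continuous)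
    ((hA.isConvexExpectation_dyadicLimit ht).isBUC hf).continuous
    (hA.antitone_dyadicIterate ht hf) (hA.tendsto_dyadicIterate ht hf)
    (hA.tendsto_cocompact_dyadicIterate 0 ht hf hf₀) (hA.tendsto_cocompact_dyadicLimit ht hf hf₀)

lemma dyadicLimit_zero (hA : IsChernoffFamily A) (hf : IsBUC f) : dyadicLimit A 0 f = f := by
  ext x
  have hiter : ∀ n, dyadicIterate A n 0 f = f := fun n => by
    simpa only [Nat.cast_zero, zero_mul, Function.iterate_zero_apply] using
      hA.dyadicIterate_natCast_mul n 0 hf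
  simp only [dyadicLimit, hiter, ciInf_const]

lemma exists_forall_abs_dyadicLimit_sub_le (hA : IsChernoffFamily A) (hf : IsBUC f) {ε : ℝ}
    (hε : 0 < ε) : ∃ δ > 0, ∀ t, 0 ≤ t → t < δ → ∀ x, |dyadicLimit A t f x - f x| ≤ ε := by
  obtain ⟨δ, hδ, hsmall⟩ := mem_nhdsGT_iff_exists_Ioo_subset.1
    ((hA.eventually_le_add hf hε).and (hA.eventually_le_add hf.neg hε))
  refine ⟨min δ 1, lt_min hδ one_pos, fun t ht htδ x => ?_⟩
  rcases ht.eq_or_lt with rfl | htpos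
  · simpa only [hA.dyadicLimit_zero hf, sub_self, abs_zero] using hε.le
  obtain ⟨hupper, hlower⟩ := hsmall ⟨htpos, htδ.trans_le (min_le_left _ _)⟩
  have hone_step : dyadicIterate A 0 t = A t := by
    ext g
    simpa using congrFun (dyadicIterate_natCast_mul_add A 0 0 ht
      (by simpa using htδ.trans_le (min_le_right _ _)) g) _
  have hle := hA.dyadicLimit_le ht hf 0 x
  have hge := hA.neg_dyadicIterate_neg_le ht hf 0 x
  rw [hone_step] at hle hge
  exact abs_sub_le_iff.2 ⟨by linarith [hupper x], by linarith [hlower x]⟩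

lemma tendstoUniformly_dyadicLimit (hA : IsChernoffFamily A) (hf : IsBUC f) :
    TendstoUniformly (fun t x => dyadicLimit A t f x) f (𝓝[>] 0) := by
  refine Metric.tendstoUniformly_iff.2 fun ε hε => ?_
  obtain ⟨δ, hδ, hclose⟩ := hA.exists_forall_abs_dyadicLimit_sub_le hf (half_pos hε)
  filter_upwards [Ioo_mem_nhdsGT hδ] with t ht x
  rw [dist_comm, Real.dist_eq]
  exact (hclose t ht.1.le ht.2 x).trans_lt (half_lt_self hε)

lemma dyadicLimit_natCast_mul_add (hA : IsChernoffFamily A) (m j : ℕ) (hs : 0 ≤ s)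
    (hf : IsBUC f) (hf₀ : Tendsto f (cocompact E) (𝓝 0)) :
    dyadicLimit A (j * ((2 : ℝ) ^ m)⁻¹ + s) f =
      dyadicLimit A (j * ((2 : ℝ) ^ m)⁻¹) (dyadicLimit A s f) := by
  ext x
  have ha : 0 ≤ j * ((2 : ℝ) ^ m)⁻¹ := by positivity
  have hLs : IsBUC (dyadicLimit A s f) := (hA.isConvexExpectation_dyadicLimit hs).isBUC hf
  have hsplit : ∀ n ≥ m, dyadicIterate A n (j * ((2 : ℝ) ^ m)⁻¹ + s) f =
      dyadicIterate A n (j * ((2 : ℝ) ^ m)⁻¹) (dyadicIterate A n s f) := fun n hn => by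
    obtain ⟨k, rfl⟩ := Nat.exists_eq_add_of_le hn
    have htime : j * ((2 : ℝ) ^ m)⁻¹ = ((j * 2 ^ k : ℕ) : ℝ) * ((2 : ℝ) ^ (m + k))⁻¹ := by
      push_cast
      rw [pow_add]
      field_simp
    rw [htime, hA.dyadicIterate_add _ _ hs hf]
  have hdiff : Tendsto (fun n => dyadicIterate A n (j * ((2 : ℝ) ^ m)⁻¹ + s) f x -
      dyadicIterate A n (j * ((2 : ℝ) ^ m)⁻¹) (dyadicLimit A s f) x) atTop (𝓝 0) := by
    refine Metric.tendsto_atTop'.2 fun ε hε => ?_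
    obtain ⟨N, hN⟩ := eventually_atTop.1
      (Metric.tendstoUniformly_iff.1 (hA.tendstoUniformly_dyadicIterate hs hf hf₀) _ (half_pos hε))
    refine ⟨max N m, fun n hn => ?_⟩
    rw [hsplit n ((le_max_right _ _).trans hn.le), Real.dist_eq, sub_zero]
    refine lt_of_le_of_lt ?_ (half_lt_self hε)
    exact (hA.isConvexExpectation_dyadicIterate n ha).abs_sub_le
      ((hA.isConvexExpectation_dyadicIterate n hs).isBUC hf) hLs (fun y => by
        simpa only [dist_comm, Real.dist_eq] using (hN n ((le_max_left _ _).trans hn.le) y).le) x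
  have hlim := hdiff.add (hA.tendsto_dyadicIterate ha hLs x)
  simp only [sub_add_cancel, zero_add] at hlim
  exact tendsto_nhds_unique (hA.tendsto_dyadicIterate (by positivity) hf x) hlim

lemma exists_forall_abs_dyadicLimit_add_sub_le (hA : IsChernoffFamily A) (hf : IsBUC f)
    (hf₀ : Tendsto f (cocompact E) (𝓝 0)) (hs : 0 ≤ s) {ε : ℝ} (hε : 0 < ε) :
    ∃ δ > 0, ∀ r, 0 ≤ r → r < δ → ∀ x, |dyadicLimit A (r + s) f x - dyadicLimit A s f x| ≤ ε := by
  obtain ⟨δ, hδ, hclose⟩ := hA.exists_forall_abs_dyadicLimit_sub_le hf (half_pos hε)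
  obtain ⟨n, hn⟩ := exists_two_pow_inv_lt (half_pos hδ)
  obtain ⟨j, q, hq, hqn, rfl⟩ := exists_natCast_mul_add (h := ((2 : ℝ) ^ n)⁻¹) (by positivity) hs
  refine ⟨δ / 2, half_pos hδ, fun r hr hrδ x => ?_⟩
  have hrq : 0 ≤ r + q := add_nonneg hr hq
  rw [add_left_comm, hA.dyadicLimit_natCast_mul_add n j hrq hf hf₀,
    hA.dyadicLimit_natCast_mul_add n j hq hf hf₀]
  refine (hA.isConvexExpectation_dyadicLimit (by positivity)).abs_sub_le
    ((hA.isConvexExpectation_dyadicLimit hrq).isBUC hf)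
    ((hA.isConvexExpectation_dyadicLimit hq).isBUC hf) (fun y => ?_) x
  have hrq_close := abs_sub_le_iff.1 (hclose (r + q) hrq (by linarith) y)
  have hq_close := abs_sub_le_iff.1 (hclose q hq (by linarith) y)
  exact abs_sub_le_iff.2 ⟨by linarith, by linarith⟩

-- Split off the largest dyadic part `a` of `t = a + r`; both sides are then `dyadicLimit A a`
-- applied to functions that are close to `dyadicLimit A s f` when `r` is small.
lemma dyadicLimit_dyadicLimit (hA : IsChernoffFamily A) (hf : IsBUC f)
    (hf₀ : Tendsto f (cocompact E) (𝓝 0)) (ht : 0 ≤ t) (hs : 0 ≤ s) :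
    dyadicLimit A t (dyadicLimit A s f) = dyadicLimit A (t + s) f := by
  ext x
  have hLs : IsBUC (dyadicLimit A s f) := (hA.isConvexExpectation_dyadicLimit hs).isBUC hf
  refine eq_of_forall_dist_le fun ε hε => ?_
  obtain ⟨δ₁, hδ₁, hzero⟩ := hA.exists_forall_abs_dyadicLimit_sub_le hLs (half_pos hε)
  obtain ⟨δ₂, hδ₂, hright⟩ := hA.exists_forall_abs_dyadicLimit_add_sub_le hf hf₀ hs (half_pos hε)
  obtain ⟨n, hn⟩ := exists_two_pow_inv_lt (lt_min hδ₁ hδ₂)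
  obtain ⟨j, r, hr, hrn, rfl⟩ := exists_natCast_mul_add (h := ((2 : ℝ) ^ n)⁻¹) (by positivity) ht
  obtain ⟨hr₁, hr₂⟩ := lt_min_iff.1 (hrn.trans hn)
  have hrs : 0 ≤ r + s := add_nonneg hr hs
  rw [add_assoc, hA.dyadicLimit_natCast_mul_add n j hrs hf hf₀,
    hA.dyadicLimit_natCast_mul_add n j hr hLs (hA.tendsto_cocompact_dyadicLimit hs hf hf₀),
    Real.dist_eq]
  refine (hA.isConvexExpectation_dyadicLimit (by positivity)).abs_sub_le
    ((hA.isConvexExpectation_dyadicLimit hr).isBUC hLs)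
    ((hA.isConvexExpectation_dyadicLimit hrs).isBUC hf) (fun y => ?_) x
  have hzero_y := abs_sub_le_iff.1 (hzero r hr hr₁ y)
  have hright_y := abs_sub_le_iff.1 (hright r hr hr₂ y)
  exact abs_sub_le_iff.2 ⟨by linarith, by linarith⟩

end IsChernoffFamily

/-! ### Penalty functions -/

/-- The real number `c` dominates the scaled penalty `φ_t(w)`. Working with all such `c` avoids the
possibly infinite value `φ_t(w)` itself. -/
def IsAdmissible (φ : ℝ≥0 → ℝ≥0∞) (t w c : ℝ) : Prop :=
  0 ≤ c ∧ phit φ t w.toNNReal ≤ ENNReal.ofReal c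

/-- The epigraph of `a ↦ φ_t(a^{1/p})`, the set in which Jensen's inequality takes place. -/
def penaltyEpigraph (p : ℝ) (φ : ℝ≥0 → ℝ≥0∞) (t : ℝ) : Set (ℝ × ℝ) :=
  {q | 0 ≤ q.1 ∧ IsAdmissible φ t (q.1 ^ (1 / p)) q.2}

lemma isAdmissible_iff {φ : ℝ≥0 → ℝ≥0∞} {t w c : ℝ} (ht : 0 < t) :
    IsAdmissible φ t w c ↔ 0 ≤ c ∧ φ (w / t).toNNReal ≤ ENNReal.ofReal (c / t) := by
  rw [IsAdmissible, phit, if_pos ht, ENNReal.ofReal_div_of_pos ht, Real.toNNReal_div' ht.le,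
    ENNReal.le_div_iff_mul_le (Or.inl (by simpa using ht)) (Or.inl ENNReal.ofReal_ne_top), mul_comm]
  rfl

lemma toNNReal_rpow_div {p a t : ℝ} (hp : p ≠ 0) (ha : 0 ≤ a) (ht : 0 < t) :
    (a ^ (1 / p) / t).toNNReal = (a / t ^ p).toNNReal ^ (1 / p) := by
  rw [← Real.toNNReal_rpow_of_nonneg (by positivity), Real.div_rpow ha (by positivity),
    ← Real.rpow_mul ht.le, mul_one_div_cancel hp, Real.rpow_one]

namespace IsPenalty

variable {p : ℝ} {φ : ℝ≥0 → ℝ≥0∞} {s t : ℝ}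

lemma isAdmissible_zero (hφ : IsPenalty p φ) (t : ℝ) : IsAdmissible φ t 0 0 := by
  refine ⟨le_rfl, ?_⟩
  rw [phit, Real.toNNReal_zero, zero_div, hφ.map_zero, mul_zero, if_pos rfl, ite_self]
  exact zero_le

lemma isAdmissible_mono (hφ : IsPenalty p φ) {w w' c : ℝ} (ht : 0 < t) (hw : w ≤ w')
    (h : IsAdmissible φ t w' c) : IsAdmissible φ t w c := by
  rw [isAdmissible_iff ht] at h ⊢
  exact ⟨h.1, (hφ.mono (Real.toNNReal_le_toNNReal (by gcongr))).trans h.2⟩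

-- `φ_{s+t}(a+b) ≤ φ_s(a) + φ_t(b)` is convexity of `φ` with weights `s/(s+t)` and `t/(s+t)`.
lemma isAdmissible_add (hφ : IsPenalty p φ) {a b c e : ℝ} (hs : 0 < s) (ht : 0 < t) (ha : 0 ≤ a)
    (hb : 0 ≤ b) (hac : IsAdmissible φ s a c) (hbe : IsAdmissible φ t b e) :
    IsAdmissible φ (s + t) (a + b) (c + e) := by
  have hst : 0 < s + t := add_pos hs ht
  obtain ⟨hc, hac⟩ := (isAdmissible_iff hs).1 hac
  obtain ⟨he, hbe⟩ := (isAdmissible_iff ht).1 hbe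
  refine (isAdmissible_iff hst).2 ⟨add_nonneg hc he, ?_⟩
  have hweights : (s / (s + t)).toNNReal + (t / (s + t)).toNNReal = 1 := by
    rw [← Real.toNNReal_add (by positivity) (by positivity), ← add_div, div_self hst.ne',
      Real.toNNReal_one]
  have harg : ((a + b) / (s + t)).toNNReal = (s / (s + t)).toNNReal * (a / s).toNNReal +
      (t / (s + t)).toNNReal * (b / t).toNNReal := by
    rw [← Real.toNNReal_mul (by positivity), ← Real.toNNReal_mul (by positivity),
      ← Real.toNNReal_add (by positivity) (by positivity)]
    congr 1
    field_simp
  have hbound : ENNReal.ofReal ((c + e) / (s + t)) =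
      (s / (s + t)).toNNReal * ENNReal.ofReal (c / s) +
        (t / (s + t)).toNNReal * ENNReal.ofReal (e / t) := by
    change _ = ENNReal.ofReal _ * _ + ENNReal.ofReal _ * _
    rw [← ENNReal.ofReal_mul (by positivity), ← ENNReal.ofReal_mul (by positivity),
      ← ENNReal.ofReal_add (by positivity) (by positivity)]
    congr 1
    field_simp
  rw [harg, hbound]
  exact (hφ.convex _ _ _ _ hweights).trans (by gcongr)

lemma isClosed_penaltyEpigraph (hφ : IsPenalty p φ) (hp : 0 < p) (ht : 0 < t) :
    IsClosed (penaltyEpigraph p φ t) := by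
  have hcont : Continuous fun q : ℝ × ℝ =>
      ((q.1 ^ (1 / p) / t).toNNReal, ENNReal.ofReal (q.2 / t)) := by
    have hroot : Continuous fun q : ℝ × ℝ => q.1 ^ (1 / p) :=
      continuous_fst.rpow_const fun _ => Or.inr (by positivity)
    exact (continuous_real_toNNReal.comp (hroot.div_const t)).prodMk
      (ENNReal.continuous_ofReal.comp (continuous_snd.div_const t))
  simp only [penaltyEpigraph, isAdmissible_iff ht, ofPred_and]
  exact (isClosed_le continuous_const continuous_fst).inter
    ((isClosed_le continuous_const continuous_snd).inter
      (hφ.lsc.isClosed_epigraph.preimage hcont))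

lemma convex_penaltyEpigraph (hφ : IsPenalty p φ) (hp : p ≠ 0) (ht : 0 < t) :
    Convex ℝ (penaltyEpigraph p φ t) := by
  rintro ⟨a, c⟩ ⟨ha, hac⟩ ⟨b, e⟩ ⟨hb, hbe⟩ l m hl hm hlm
  dsimp only at ha hac hb hbe
  have hab : 0 ≤ l * a + m * b := by positivity
  rw [isAdmissible_iff ht, toNNReal_rpow_div hp ha ht] at hac
  rw [isAdmissible_iff ht, toNNReal_rpow_div hp hb ht] at hbe
  obtain ⟨hc, hac⟩ := hac
  obtain ⟨he, hbe⟩ := hbe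
  rw [Prod.smul_mk, Prod.smul_mk, Prod.mk_add_mk]
  refine ⟨hab, (isAdmissible_iff ht).2 ⟨by positivity, ?_⟩⟩
  have hweights : l.toNNReal + m.toNNReal = 1 := by
    rw [← Real.toNNReal_add hl hm, hlm, Real.toNNReal_one]
  have harg : ((l * a + m * b) / t ^ p).toNNReal =
      l.toNNReal * (a / t ^ p).toNNReal + m.toNNReal * (b / t ^ p).toNNReal := by
    rw [← Real.toNNReal_mul hl, ← Real.toNNReal_mul hm,
      ← Real.toNNReal_add (by positivity) (by positivity)]
    congr 1
    ring
  have hbound : ENNReal.ofReal ((l * c + m * e) / t) =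
      l.toNNReal * ENNReal.ofReal (c / t) + m.toNNReal * ENNReal.ofReal (e / t) := by
    change _ = ENNReal.ofReal _ * _ + ENNReal.ofReal _ * _
    rw [← ENNReal.ofReal_mul hl, ← ENNReal.ofReal_mul hm,
      ← ENNReal.ofReal_add (by positivity) (by positivity)]
    congr 1
    ring
  simp only [smul_eq_mul]
  rw [toNNReal_rpow_div hp hab ht, harg, hbound]
  exact (hφ.convex_rpow _ _ _ _ hweights).trans (by gcongr)

lemma isAdmissible_integral_rpow (hφ : IsPenalty p φ) (hp : 0 < p) (ht : 0 < t) {Ω : Type*}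
    [MeasurableSpace Ω] {P : Measure Ω} [IsProbabilityMeasure P] {w c : Ω → ℝ}
    (hw : ∀ ω, 0 ≤ w ω) (hwc : ∀ ω, IsAdmissible φ t (w ω) (c ω))
    (hw_int : Integrable (fun ω => w ω ^ p) P) (hc_int : Integrable c P) :
    IsAdmissible φ t ((∫ ω, w ω ^ p ∂P) ^ (1 / p)) (∫ ω, c ω ∂P) := by
  have hmem : ∀ ω, (w ω ^ p, c ω) ∈ penaltyEpigraph p φ t := fun ω =>
    ⟨Real.rpow_nonneg (hw ω) p, by
      simpa only [one_div, Real.rpow_rpow_inv (hw ω) hp.ne'] using hwc ω⟩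
  have hmean := (hφ.convex_penaltyEpigraph hp.ne' ht).integral_mem
    (hφ.isClosed_penaltyEpigraph hp ht) (Eventually.of_forall hmem) (hw_int.prodMk hc_int)
  rw [integral_pair hw_int hc_int] at hmean
  exact hmean.2

lemma exists_pos_le (hφ : IsPenalty p φ) : ∃ z m : ℝ≥0, 0 < m ∧ (m : ℝ≥0∞) ≤ φ z := by
  obtain ⟨z, hz⟩ : ∃ z, φ z ≠ 0 := by
    by_contra! hzero
    obtain ⟨a, b, hab⟩ := hφ.not_const
    exact hab (by rw [hzero, hzero])
  obtain ⟨m, hm, hmz⟩ := ENNReal.lt_iff_exists_nnreal_btwn.1 (pos_iff_ne_zero.2 hz)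
  exact ⟨z, m, by exact_mod_cast hm, hmz.le⟩

-- Convexity of `x ↦ φ(x^{1/p})` between `0` and `u^p` bounds `φ z` by `(z/u)^p φ(u)`.
lemma rpow_le_of_le (hφ : IsPenalty p φ) (hp : 0 < p) {z m u b : ℝ≥0} (hm : 0 < m)
    (hmz : (m : ℝ≥0∞) ≤ φ z) (hub : φ u ≤ b) : u ^ p ≤ z ^ p + z ^ p / m * b := by
  rcases le_or_gt (u ^ p) (z ^ p) with hle | hlt
  · exact hle.trans le_self_add
  have hu : 0 < u ^ p := pos_of_gt hlt
  have hz_le : φ z ≤ (z ^ p / u ^ p : ℝ≥0) * φ u := by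
    have hconv := hφ.convex_rpow (u ^ p) 0 (z ^ p / u ^ p) (1 - z ^ p / u ^ p)
      (add_tsub_cancel_of_le ((div_le_one hu).2 hlt.le))
    have hroot : ∀ a : ℝ≥0, (a ^ p) ^ (1 / p) = a := fun a => by
      rw [one_div, NNReal.rpow_rpow_inv hp.ne']
    rwa [mul_zero, add_zero, div_mul_cancel₀ _ hu.ne', hroot, hroot,
      NNReal.zero_rpow (one_div_pos.2 hp).ne', hφ.map_zero, mul_zero, add_zero] at hconv
  have hm_le : m ≤ z ^ p / u ^ p * b := by
    have : (m : ℝ≥0∞) ≤ (z ^ p / u ^ p : ℝ≥0) * b := hmz.trans (hz_le.trans (by gcongr))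
    exact_mod_cast this
  refine le_add_left ?_
  rw [div_mul_eq_mul_div, le_div_iff₀ hu] at hm_le
  rwa [div_mul_eq_mul_div, le_div_iff₀ hm, mul_comm]

lemma exists_rpow_le (hφ : IsPenalty p φ) (hp : 0 < p) :
    ∃ a b : ℝ, 0 ≤ a ∧ 0 ≤ b ∧ ∀ t w c, 0 < t → 0 ≤ w → IsAdmissible φ t w c →
      w ^ p ≤ a * t ^ (p - 1) * c + b * t ^ p := by
  obtain ⟨z, m, hm, hmz⟩ := hφ.exists_pos_le
  refine ⟨z ^ p / m, z ^ p, by positivity, by positivity, fun t w c ht hw hwc => ?_⟩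
  obtain ⟨hc, hwc⟩ := (isAdmissible_iff ht).1 hwc
  have hunscaled : (w / t) ^ p ≤ z ^ p + z ^ p / m * (c / t) := by
    have := NNReal.coe_le_coe.2 (hφ.rpow_le_of_le hp hm hmz hwc)
    push_cast at this
    rwa [Real.coe_toNNReal _ (by positivity), Real.coe_toNNReal _ (by positivity)] at this
  rw [Real.div_rpow hw ht.le, div_le_iff₀ (by positivity)] at hunscaled
  have htp : t ^ p = t ^ (p - 1) * t := by rw [← Real.rpow_add_one ht.ne', sub_add_cancel]
  calc w ^ p ≤ (z ^ p + z ^ p / m * (c / t)) * t ^ p := hunscaled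
    _ = z ^ p / m * t ^ (p - 1) * c + z ^ p * t ^ p := by
        rw [htp]
        field_simp
        ring

lemma exists_pos_mul_rpow_le_add (hφ : IsPenalty p φ) (hp : 0 < p) (ht : 0 < t) {ε : ℝ}
    (hε : 0 < ε) :
    ∃ K > 0, ∀ w c, 0 ≤ w → IsAdmissible φ t w c → K * w ^ p ≤ c + ε := by
  obtain ⟨a, b, ha, hb, hgrowth⟩ := hφ.exists_rpow_le hp
  obtain ⟨K₁, hK₁, hKa⟩ := exists_pos_mul_lt one_pos (a * t ^ (p - 1))
  obtain ⟨K₂, hK₂, hKb⟩ := exists_pos_mul_lt hε (b * t ^ p)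
  refine ⟨min K₁ K₂, lt_min hK₁ hK₂, fun w c hw hc => ?_⟩
  have hc₀ : 0 ≤ c := hc.1
  calc min K₁ K₂ * w ^ p ≤ min K₁ K₂ * (a * t ^ (p - 1) * c + b * t ^ p) := by
        gcongr
        exact hgrowth t w c ht hw hc
    _ = a * t ^ (p - 1) * min K₁ K₂ * c + b * t ^ p * min K₁ K₂ := by ring
    _ ≤ a * t ^ (p - 1) * K₁ * c + b * t ^ p * K₂ := by
        gcongr
        · exact min_le_left K₁ K₂
        · exact min_le_right K₁ K₂
    _ ≤ c + ε := add_le_add (mul_le_of_le_one_left hc₀ hKa.le) hKb.le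

end IsPenalty

/-! ### Transport plans and the Wasserstein distance -/

/-- The `p`-cost `∫ |y - x|^p γ(dx, dy)` of a transport plan `γ`. -/
def transportCost {d : ℕ} (p : ℝ) (γ : Measure (Ed d × Ed d)) : ℝ≥0∞ :=
  ∫⁻ q, (‖q.2 - q.1‖₊ : ℝ≥0∞) ^ p ∂γ

lemma lintegral_nnnorm_add_rpow_le {Ω E : Type*} [MeasurableSpace Ω] [NormedAddCommGroup E]
    [MeasurableSpace E] [OpensMeasurableSpace E] (m : Measure Ω) {p : ℝ} (hp : 1 ≤ p)
    {u v : Ω → E} (hu : Measurable u) (hv : Measurable v) :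
    (∫⁻ ω, (‖u ω + v ω‖₊ : ℝ≥0∞) ^ p ∂m) ^ (1 / p) ≤
      (∫⁻ ω, (‖u ω‖₊ : ℝ≥0∞) ^ p ∂m) ^ (1 / p) + (∫⁻ ω, (‖v ω‖₊ : ℝ≥0∞) ^ p ∂m) ^ (1 / p) := by
  refine le_trans ?_ (ENNReal.lintegral_Lp_add_le (f := fun ω => (‖u ω‖₊ : ℝ≥0∞))
    (g := fun ω => (‖v ω‖₊ : ℝ≥0∞)) hu.nnnorm.coe_nnreal_ennreal.aemeasurable
    hv.nnnorm.coe_nnreal_ennreal.aemeasurable hp)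
  gcongr with ω
  rw [Pi.add_apply]
  exact_mod_cast nnnorm_add_le (u ω) (v ω)

lemma coe_nnnorm_rpow {E : Type*} [NormedAddCommGroup E] {p : ℝ} (hp : 0 ≤ p) (x : E) :
    (‖x‖₊ : ℝ≥0∞) ^ p = ENNReal.ofReal (‖x‖ ^ p) := by
  rw [← ENNReal.ofReal_rpow_of_nonneg (norm_nonneg x) hp, ofReal_norm]
  rfl

section Wasserstein

variable {d : ℕ} {p : ℝ} {μ ν : Measure (Ed d)} {γ : Measure (Ed d × Ed d)}

lemma integrable_norm_sub_rpow (hp : 0 ≤ p) (hγ : transportCost p γ ≠ ∞) :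
    Integrable (fun q => ‖q.2 - q.1‖ ^ p) γ := by
  have hmeas : Measurable fun q : Ed d × Ed d => ‖q.2 - q.1‖ ^ p := by fun_prop
  refine ⟨hmeas.aestronglyMeasurable, ?_⟩
  rw [hasFiniteIntegral_iff_ofReal (Eventually.of_forall fun _ => by positivity)]
  simpa only [transportCost, coe_nnnorm_rpow hp] using hγ.lt_top

lemma integral_norm_sub_rpow (hp : 0 ≤ p) :
    ∫ q, ‖q.2 - q.1‖ ^ p ∂γ = (transportCost p γ).toReal := by
  have hmeas : Measurable fun q : Ed d × Ed d => ‖q.2 - q.1‖ ^ p := by fun_prop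
  simp only [transportCost, coe_nnnorm_rpow hp]
  exact integral_eq_lintegral_of_nonneg_ae (Eventually.of_forall fun _ => by positivity)
    hmeas.aestronglyMeasurable

namespace IsCoupling

lemma lintegral_fst (hγ : IsCoupling γ μ ν) {F : Ed d → ℝ≥0∞} (hF : Measurable F) :
    ∫⁻ q, F q.1 ∂γ = ∫⁻ x, F x ∂μ := by
  rw [← hγ.1, lintegral_map hF measurable_fst]

lemma lintegral_snd (hγ : IsCoupling γ μ ν) {F : Ed d → ℝ≥0∞} (hF : Measurable F) :
    ∫⁻ q, F q.2 ∂γ = ∫⁻ x, F x ∂ν := by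
  rw [← hγ.2, lintegral_map hF measurable_snd]

lemma isProbabilityMeasure (hγ : IsCoupling γ μ ν) [hμ : IsProbabilityMeasure μ] :
    IsProbabilityMeasure γ := by
  rw [← hγ.1] at hμ
  exact Measure.isProbabilityMeasure_of_map Prod.fst

lemma prod (μ ν : Measure (Ed d)) [IsProbabilityMeasure μ] [IsProbabilityMeasure ν] :
    IsCoupling (μ.prod ν) μ ν := by
  constructor <;> simp

lemma diagonal (μ : Measure (Ed d)) : IsCoupling (μ.map fun x => (x, x)) μ μ := by
  have hmeas : Measurable fun x : Ed d => (x, x) := by fun_prop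
  exact ⟨(Measure.map_map measurable_fst hmeas).trans Measure.map_id,
    (Measure.map_map measurable_snd hmeas).trans Measure.map_id⟩

lemma transportCost_rpow_le (hγ : IsCoupling γ μ ν) (hp : 1 ≤ p) :
    transportCost p γ ^ (1 / p) ≤
      (∫⁻ x, (‖x‖₊ : ℝ≥0∞) ^ p ∂ν) ^ (1 / p) + (∫⁻ x, (‖x‖₊ : ℝ≥0∞) ^ p ∂μ) ^ (1 / p) := by
  have hmink := lintegral_nnnorm_add_rpow_le γ hp (u := Prod.snd) (v := fun q => -q.1)
    measurable_snd measurable_fst.neg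
  simp only [← sub_eq_add_neg, nnnorm_neg] at hmink
  rwa [hγ.lintegral_fst (F := fun x => (‖x‖₊ : ℝ≥0∞) ^ p) (by fun_prop),
    hγ.lintegral_snd (F := fun x => (‖x‖₊ : ℝ≥0∞) ^ p) (by fun_prop)] at hmink

lemma memPp (hγ : IsCoupling γ μ ν) (hp : 1 ≤ p) (hμ : MemPp p μ) (hcost : transportCost p γ ≠ ∞) :
    MemPp p ν := by
  have hp₀ : 0 < 1 / p := by positivity
  have := hμ.1
  have := hγ.isProbabilityMeasure
  refine ⟨hγ.2 ▸ Measure.isProbabilityMeasure_map measurable_snd.aemeasurable, ?_⟩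
  have hmink := lintegral_nnnorm_add_rpow_le γ hp (u := Prod.fst) (v := fun q => q.2 - q.1)
    measurable_fst (measurable_snd.sub measurable_fst)
  simp only [add_sub_cancel] at hmink
  rw [hγ.lintegral_fst (F := fun x => (‖x‖₊ : ℝ≥0∞) ^ p) (by fun_prop),
    hγ.lintegral_snd (F := fun x => (‖x‖₊ : ℝ≥0∞) ^ p) (by fun_prop)] at hmink
  refine (ENNReal.rpow_lt_top_iff_of_pos hp₀).1 (hmink.trans_lt (ENNReal.add_lt_top.2 ⟨?_, ?_⟩))
  · exact (ENNReal.rpow_lt_top_iff_of_pos hp₀).2 hμ.2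
  · exact (ENNReal.rpow_lt_top_iff_of_pos hp₀).2 hcost.lt_top

lemma Wp_le (hγ : IsCoupling γ μ ν) {w : ℝ} (hw : 0 ≤ w)
    (hcost : transportCost p γ ^ (1 / p) ≤ ENNReal.ofReal w) : Wp p μ ν ≤ w :=
  ENNReal.toReal_le_of_le_ofReal hw ((iInf₂_le γ hγ).trans hcost)

end IsCoupling

lemma Wp_nonneg (p : ℝ) (μ ν : Measure (Ed d)) : 0 ≤ Wp p μ ν :=
  ENNReal.toReal_nonneg

lemma Wp_self (hp : 0 < p) (μ : Measure (Ed d)) : Wp p μ μ = 0 := by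
  refine le_antisymm ((IsCoupling.diagonal μ).Wp_le le_rfl ?_) (Wp_nonneg p μ μ)
  rw [transportCost, lintegral_map (by fun_prop) (by fun_prop)]
  simp [hp]

lemma exists_isCoupling_transportCost_le (hp : 1 ≤ p) (hμ : MemPp p μ) (hν : MemPp p ν) {η : ℝ}
    (hη : 0 < η) :
    ∃ γ, IsCoupling γ μ ν ∧ transportCost p γ ≤ ENNReal.ofReal (Wp p μ ν ^ p + η) := by
  have hp₀ : 0 < p := by positivity
  have := hμ.1
  have := hν.1
  have hfin : ⨅ γ ∈ {γ | IsCoupling γ μ ν}, transportCost p γ ^ (1 / p) ≠ ∞ := by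
    refine ne_top_of_le_ne_top ?_
      ((iInf₂_le (μ.prod ν) (.prod μ ν)).trans (IsCoupling.transportCost_rpow_le (.prod μ ν) hp))
    exact ENNReal.add_ne_top.2 ⟨ENNReal.rpow_ne_top_of_nonneg (by positivity) hν.2.ne,
      ENNReal.rpow_ne_top_of_nonneg (by positivity) hμ.2.ne⟩
  have hW := Wp_nonneg p μ ν
  have hlt : ⨅ γ ∈ {γ | IsCoupling γ μ ν}, transportCost p γ ^ (1 / p) <
      ENNReal.ofReal ((Wp p μ ν ^ p + η) ^ (1 / p)) := by
    rw [ENNReal.lt_ofReal_iff_toReal_lt hfin]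
    calc Wp p μ ν = (Wp p μ ν ^ p) ^ (1 / p) := by rw [one_div, Real.rpow_rpow_inv hW hp₀.ne']
      _ < (Wp p μ ν ^ p + η) ^ (1 / p) :=
        Real.rpow_lt_rpow (by positivity) (lt_add_of_pos_right _ hη) (by positivity)
  obtain ⟨γ, hγ, hcost⟩ := by simpa only [iInf_lt_iff] using hlt
  rw [← ENNReal.ofReal_rpow_of_nonneg (by positivity) (by positivity),
    ENNReal.rpow_lt_rpow_iff (by positivity)] at hcost
  exact ⟨γ, hγ, hcost.le⟩

-- The easy half of Kantorovich duality.
lemma integral_le_integral_add_Wp_rpow (hp : 1 ≤ p) (hμ : MemPp p μ) (hν : MemPp p ν)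
    {f u : Ed d → ℝ} {K : ℝ} (hK : 0 ≤ K) (hf : Integrable f ν) (hu : Integrable u μ)
    (hfu : ∀ x y, f y ≤ u x + K * ‖y - x‖ ^ p) :
    ∫ y, f y ∂ν ≤ (∫ x, u x ∂μ) + K * Wp p μ ν ^ p := by
  have hp₀ : 0 ≤ p := by positivity
  have hcont : Continuous fun η : ℝ => (∫ x, u x ∂μ) + K * (Wp p μ ν ^ p + η) := by fun_prop
  refine (ge_of_tendsto (hcont.continuousWithinAt (s := Ioi 0) (x := 0))
    (eventually_nhdsWithin_of_forall fun η (hη : 0 < η) => ?_)).trans_eq (by simp only [add_zero])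
  obtain ⟨γ, hγ, hcost⟩ := exists_isCoupling_transportCost_le hp hμ hν hη
  have hW := Wp_nonneg p μ ν
  have hdist := integrable_norm_sub_rpow hp₀ (ne_top_of_le_ne_top ENNReal.ofReal_ne_top hcost)
  have hdist_le : ∫ q, ‖q.2 - q.1‖ ^ p ∂γ ≤ Wp p μ ν ^ p + η := by
    rw [integral_norm_sub_rpow hp₀]
    exact ENNReal.toReal_le_of_le_ofReal (by positivity) hcost
  have hu_fst : ∫ q, u q.1 ∂γ = ∫ x, u x ∂μ := by
    rw [← hγ.1, integral_map measurable_fst.aemeasurable (hγ.1 ▸ hu.1)]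
  have hf_snd : ∫ q, f q.2 ∂γ = ∫ y, f y ∂ν := by
    rw [← hγ.2, integral_map measurable_snd.aemeasurable (hγ.2 ▸ hf.1)]
  have hu_int : Integrable (fun q => u q.1) γ := (hγ.1 ▸ hu).comp_measurable measurable_fst
  have hf_int : Integrable (fun q => f q.2) γ := (hγ.2 ▸ hf).comp_measurable measurable_snd
  calc ∫ y, f y ∂ν = ∫ q, f q.2 ∂γ := hf_snd.symm
    _ ≤ ∫ q, (u q.1 + K * ‖q.2 - q.1‖ ^ p) ∂γ :=
        integral_mono hf_int (hu_int.add (hdist.const_mul K)) fun q => hfu _ _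
    _ = (∫ x, u x ∂μ) + K * ∫ q, ‖q.2 - q.1‖ ^ p ∂γ := by
        rw [integral_add hu_int (hdist.const_mul K), integral_const_mul, hu_fst]
    _ ≤ (∫ x, u x ∂μ) + K * (Wp p μ ν ^ p + η) := by gcongr

lemma memPp_dirac_zero (hp : 0 < p) : MemPp p (Measure.dirac (0 : Ed d)) :=
  ⟨inferInstance, by rw [lintegral_dirac]; simp [hp]⟩

lemma MemPp.conv (hμ : MemPp p μ) (hν : MemPp p ν) (hp : 1 ≤ p) : MemPp p (μ.conv ν) := by
  have := hμ.1
  have := hν.1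
  have hmeas : Measurable fun q : Ed d × Ed d => (q.1, q.1 + q.2) := by fun_prop
  have hγ : IsCoupling ((μ.prod ν).map fun q => (q.1, q.1 + q.2)) μ (μ.conv ν) :=
    ⟨(Measure.map_map measurable_fst hmeas).trans (IsCoupling.prod μ ν).1,
      Measure.map_map measurable_snd hmeas⟩
  refine hγ.memPp hp hμ ?_
  rw [transportCost, lintegral_map (by fun_prop) hmeas]
  simp only [add_sub_cancel_left]
  rw [(IsCoupling.prod μ ν).lintegral_snd (F := fun x => (‖x‖₊ : ℝ≥0∞) ^ p) (by fun_prop)]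
  exact hν.2.ne

end Wasserstein

/-! ### Convolution of a measure with a kernel -/

section KernelConv

open ProbabilityTheory

variable {E F : Type*} [MeasurableSpace E] [AddMonoid E] [MeasurableSpace F] [AddMonoid F]

/-- The law of `Y + Z`, where `Y` has law `ν` and `Z` has conditional law `κ y` given `Y = y`. -/
def kernelConv (ν : Measure E) (κ : Kernel E E) : Measure E :=
  (ν.compProd κ).map fun q => q.1 + q.2

lemma kernelConv_const (μ ν : Measure E) [SFinite μ] [SFinite ν] :
    kernelConv μ (Kernel.const E ν) = μ.conv ν := by
  rw [kernelConv, Measure.compProd_const]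
  rfl

variable [MeasurableAdd₂ E] [MeasurableAdd₂ F]

lemma lintegral_kernelConv {ν : Measure E} [SFinite ν] {κ : Kernel E E} [IsSFiniteKernel κ]
    {f : E → ℝ≥0∞} (hf : Measurable f) :
    ∫⁻ x, f x ∂kernelConv ν κ = ∫⁻ y, ∫⁻ z, f (y + z) ∂κ y ∂ν := by
  rw [kernelConv, lintegral_map hf measurable_add, Measure.lintegral_compProd (by fun_prop)]

lemma integral_kernelConv {ν : Measure E} [SFinite ν] {κ : Kernel E E} [IsSFiniteKernel κ]
    {f : E → ℝ} (hf : Integrable f (kernelConv ν κ)) :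
    Integrable (fun y => ∫ z, f (y + z) ∂κ y) ν ∧
      ∫ x, f x ∂kernelConv ν κ = ∫ y, ∫ z, f (y + z) ∂κ y ∂ν := by
  have hsum : Integrable (fun q : E × E => f (q.1 + q.2)) (ν.compProd κ) :=
    Integrable.comp_measurable hf measurable_add
  refine ⟨Integrable.integral_compProd (κ := Kernel.const Unit ν)
    (η := Kernel.prodMkLeft Unit κ) (a := ()) hsum, ?_⟩
  rw [kernelConv, integral_map measurable_add.aemeasurable hf.1, Measure.integral_compProd hsum]

lemma map_kernelConv {γ : Measure E} [SFinite γ] {η : Kernel E E} [IsSFiniteKernel η]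
    {ν : Measure F} [SFinite ν] {κ : Kernel F F} [IsSFiniteKernel κ] (π : E →+ F)
    (hπ : Measurable π) (hγ : γ.map π = ν) (hη : ∀ x, (η x).map π = κ (π x)) :
    (kernelConv γ η).map π = kernelConv ν κ := by
  refine Measure.ext_of_lintegral _ fun f hf => ?_
  have hinner : Measurable fun y => ∫⁻ z, f (y + z) ∂κ y :=
    (hf.comp measurable_add).lintegral_kernel_prod_right'
  rw [lintegral_map hf hπ, lintegral_kernelConv (f := fun x => f (π x)) (hf.comp hπ),
    lintegral_kernelConv hf, ← hγ, lintegral_map hinner hπ]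
  refine lintegral_congr fun x => ?_
  simp only [← hη, map_add]
  rw [lintegral_map (by fun_prop) hπ]

/-- The kernel `x ↦ ν_{ι x}` selecting a member of a sequence of measures. -/
def selectionKernel {X Y : Type*} [MeasurableSpace X] [MeasurableSpace Y] (ν : ℕ → Measure Y)
    (ι : X → ℕ) (hι : Measurable ι) : Kernel X Y :=
  (Kernel.ofFunOfCountable ν).comap ι hι

lemma isMarkovKernel_selectionKernel {X Y : Type*} [MeasurableSpace X] [MeasurableSpace Y]
    {ν : ℕ → Measure Y} (hν : ∀ n, IsProbabilityMeasure (ν n)) {ι : X → ℕ} (hι : Measurable ι) :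
    IsMarkovKernel (selectionKernel ν ι hι) :=
  ⟨fun x => hν (ι x)⟩

variable {d : ℕ} {p : ℝ} {μ₁ μ₂ ν₁ : Measure (Ed d)} {γ : Measure (Ed d × Ed d)}

lemma isCoupling_kernelConv {κ : Kernel (Ed d) (Ed d)} [IsMarkovKernel κ]
    {η : Kernel (Ed d) (Ed d × Ed d)} [IsMarkovKernel η] [SFinite γ] [SFinite μ₁] [SFinite μ₂]
    [SFinite ν₁] (hγ : IsCoupling γ μ₁ ν₁) (hη : ∀ y, IsCoupling (η y) μ₂ (κ y)) :
    IsCoupling (kernelConv γ (η.comap Prod.snd measurable_snd)) (μ₁.conv μ₂)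
      (kernelConv ν₁ κ) := by
  rw [← kernelConv_const]
  constructor
  · exact map_kernelConv (AddMonoidHom.fst (Ed d) (Ed d)) measurable_fst hγ.1 fun q => (hη q.2).1
  · exact map_kernelConv (AddMonoidHom.snd (Ed d) (Ed d)) measurable_snd hγ.2 fun q => (hη q.2).2

lemma transportCost_kernelConv_le {η : Kernel (Ed d) (Ed d × Ed d)} [IsMarkovKernel η]
    [SFinite γ] (hp : 1 ≤ p) (hγ : IsCoupling γ μ₁ ν₁) :
    transportCost p (kernelConv γ (η.comap Prod.snd measurable_snd)) ^ (1 / p) ≤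
      transportCost p γ ^ (1 / p) + (∫⁻ y, transportCost p (η y) ∂ν₁) ^ (1 / p) := by
  have hmink := lintegral_nnnorm_add_rpow_le (γ.compProd (η.comap Prod.snd measurable_snd)) hp
    (u := fun q => q.1.2 - q.1.1) (v := fun q => q.2.2 - q.2.1) (by fun_prop) (by fun_prop)
  have hcost : Measurable fun y => transportCost p (η y) :=
    Measurable.lintegral_kernel (f := fun q : Ed d × Ed d => (‖q.2 - q.1‖₊ : ℝ≥0∞) ^ p)
      (by fun_prop)
  have hfst : ∫⁻ q, (‖q.1.2 - q.1.1‖₊ : ℝ≥0∞) ^ p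
      ∂γ.compProd (η.comap Prod.snd measurable_snd) = transportCost p γ := by
    rw [Measure.lintegral_compProd (by fun_prop)]
    simp only [lintegral_const, measure_univ, mul_one, transportCost]
  have hsnd : ∫⁻ q, (‖q.2.2 - q.2.1‖₊ : ℝ≥0∞) ^ p
      ∂γ.compProd (η.comap Prod.snd measurable_snd) = ∫⁻ y, transportCost p (η y) ∂ν₁ := by
    rw [Measure.lintegral_compProd (by fun_prop), ← hγ.lintegral_snd hcost]
    rfl
  rw [hfst, hsnd] at hmink
  rw [transportCost, kernelConv, lintegral_map (by fun_prop) measurable_add]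
  simpa only [Prod.fst_add, Prod.snd_add, add_sub_add_comm] using hmink

variable {ν₂ : ℕ → Measure (Ed d)} {ι : Ed d → ℕ} {hι : Measurable ι}

lemma exists_isCoupling_kernelConv_transportCost_le (hp : 1 ≤ p) (hμ₁ : MemPp p μ₁)
    (hμ₂ : MemPp p μ₂) (hν₁ : MemPp p ν₁) (hν₂ : ∀ n, MemPp p (ν₂ n))
    (hint : Integrable (fun y => Wp p μ₂ (ν₂ (ι y)) ^ p) ν₁) {η : ℝ} (hη : 0 < η) :
    ∃ γ, IsCoupling γ (μ₁.conv μ₂) (kernelConv ν₁ (selectionKernel ν₂ ι hι)) ∧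
      transportCost p γ ^ (1 / p) ≤ ENNReal.ofReal ((Wp p μ₁ ν₁ ^ p + η) ^ (1 / p) +
        ((∫ y, Wp p μ₂ (ν₂ (ι y)) ^ p ∂ν₁) + η) ^ (1 / p)) := by
  have hWp (μ ν : Measure (Ed d)) : 0 ≤ Wp p μ ν ^ p := Real.rpow_nonneg (Wp_nonneg p μ ν) p
  have := hμ₁.1
  have := hμ₂.1
  have := hν₁.1
  obtain ⟨γ, hγ, hγ_cost⟩ := exists_isCoupling_transportCost_le hp hμ₁ hν₁ hη
  choose χ hχ hχ_cost using fun n => exists_isCoupling_transportCost_le hp hμ₂ (hν₂ n) hη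
  have := hγ.isProbabilityMeasure
  have := isMarkovKernel_selectionKernel (fun n => (hχ n).isProbabilityMeasure) hι
  have := isMarkovKernel_selectionKernel (fun n => (hν₂ n).1) hι
  have hχ_mean : ∫⁻ y, transportCost p (selectionKernel χ ι hι y) ∂ν₁ ≤
      ENNReal.ofReal ((∫ y, Wp p μ₂ (ν₂ (ι y)) ^ p ∂ν₁) + η) := by
    calc _ ≤ ∫⁻ y, ENNReal.ofReal (Wp p μ₂ (ν₂ (ι y)) ^ p + η) ∂ν₁ :=
          lintegral_mono fun y => hχ_cost (ι y)
      _ = ENNReal.ofReal (∫ y, (Wp p μ₂ (ν₂ (ι y)) ^ p + η) ∂ν₁) :=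
          (ofReal_integral_eq_lintegral_ofReal (hint.add (integrable_const η))
            (Eventually.of_forall fun y => add_nonneg (hWp _ _) hη.le)).symm
      _ = _ := by
          rw [integral_add hint (integrable_const η), integral_const, probReal_univ, one_smul]
  refine ⟨_, isCoupling_kernelConv (κ := selectionKernel ν₂ ι hι) (η := selectionKernel χ ι hι)
    hγ fun y => hχ (ι y), (transportCost_kernelConv_le hp hγ).trans ?_⟩
  have hWη : 0 ≤ Wp p μ₁ ν₁ ^ p + η := add_nonneg (hWp _ _) hη.le
  have hmeanη : 0 ≤ (∫ y, Wp p μ₂ (ν₂ (ι y)) ^ p ∂ν₁) + η :=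
    add_nonneg (integral_nonneg fun y => hWp _ _) hη.le
  rw [ENNReal.ofReal_add (Real.rpow_nonneg hWη _) (Real.rpow_nonneg hmeanη _),
    ← ENNReal.ofReal_rpow_of_nonneg hWη (by positivity),
    ← ENNReal.ofReal_rpow_of_nonneg hmeanη (by positivity)]
  gcongr

lemma Wp_kernelConv_le (hp : 1 ≤ p) (hμ₁ : MemPp p μ₁) (hμ₂ : MemPp p μ₂) (hν₁ : MemPp p ν₁)
    (hν₂ : ∀ n, MemPp p (ν₂ n)) (hint : Integrable (fun y => Wp p μ₂ (ν₂ (ι y)) ^ p) ν₁) :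
    Wp p (μ₁.conv μ₂) (kernelConv ν₁ (selectionKernel ν₂ ι hι)) ≤
      Wp p μ₁ ν₁ + (∫ y, Wp p μ₂ (ν₂ (ι y)) ^ p ∂ν₁) ^ (1 / p) := by
  have hWp (μ ν : Measure (Ed d)) : 0 ≤ Wp p μ ν ^ p := Real.rpow_nonneg (Wp_nonneg p μ ν) p
  have hmean : 0 ≤ ∫ y, Wp p μ₂ (ν₂ (ι y)) ^ p ∂ν₁ := integral_nonneg fun y => hWp _ _
  have hcont : Continuous fun η : ℝ => (Wp p μ₁ ν₁ ^ p + η) ^ (1 / p) +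
      ((∫ y, Wp p μ₂ (ν₂ (ι y)) ^ p ∂ν₁) + η) ^ (1 / p) := by
    have hp₀ : 0 ≤ 1 / p := by positivity
    exact (Continuous.rpow_const (by fun_prop) fun _ => Or.inr hp₀).add
      (Continuous.rpow_const (by fun_prop) fun _ => Or.inr hp₀)
  refine (ge_of_tendsto (hcont.continuousWithinAt (s := Ioi 0) (x := 0))
    (eventually_nhdsWithin_of_forall fun η (hη : 0 < η) => ?_)).trans_eq ?_
  · obtain ⟨γ, hγ, hcost⟩ :=
      exists_isCoupling_kernelConv_transportCost_le (hι := hι) hp hμ₁ hμ₂ hν₁ hν₂ hint hη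
    exact hγ.Wp_le (add_nonneg (Real.rpow_nonneg (add_nonneg (hWp _ _) hη.le) _)
      (Real.rpow_nonneg (add_nonneg hmean hη.le) _)) hcost
  · simp only [add_zero]
    rw [one_div, Real.rpow_rpow_inv (Wp_nonneg p μ₁ ν₁) (by positivity)]

lemma memPp_kernelConv (hp : 1 ≤ p) (hμ₁ : MemPp p μ₁) (hμ₂ : MemPp p μ₂) (hν₁ : MemPp p ν₁)
    (hν₂ : ∀ n, MemPp p (ν₂ n)) (hint : Integrable (fun y => Wp p μ₂ (ν₂ (ι y)) ^ p) ν₁) :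
    MemPp p (kernelConv ν₁ (selectionKernel ν₂ ι hι)) := by
  have hp₀ : 0 < 1 / p := by positivity
  obtain ⟨γ, hγ, hcost⟩ :=
    exists_isCoupling_kernelConv_transportCost_le (hι := hι) hp hμ₁ hμ₂ hν₁ hν₂ hint one_pos
  exact hγ.memPp hp (hμ₁.conv hμ₂ hp) ((ENNReal.rpow_lt_top_iff_of_pos hp₀).1
    (hcost.trans_lt ENNReal.ofReal_lt_top)).ne

end KernelConv

/-! ### The one-step operator -/

section OneStep

variable {d : ℕ} {p t : ℝ} {φ : ℝ≥0 → ℝ≥0∞} {μ ν : Measure (Ed d)} {f : Ed d → ℝ}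

lemma le_Sop (hf : IsBUC f) (hν : MemPp p ν) {c : ℝ} (hc : IsAdmissible φ t (Wp p μ ν) c)
    (x : Ed d) : (∫ y, f (x + y) ∂ν) - c ≤ Sop p φ μ t f x := by
  obtain ⟨M, hM⟩ := hf.bounded
  refine le_csSup ⟨M, ?_⟩ ⟨ν, hν, c, hc.1, hc.2, rfl⟩
  rintro _ ⟨ν', hν', c', hc', -, rfl⟩
  have := hν'.1
  linarith [le_of_abs_le ((IsConvexExpectation.of_integral ν').abs_le hf hM x)]

lemma IsPenalty.isAdmissible_Wp_self (hφ : IsPenalty p φ) (hp : 0 < p) (μ : Measure (Ed d))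
    (t : ℝ) : IsAdmissible φ t (Wp p μ μ) 0 := by
  rw [Wp_self hp]
  exact hφ.isAdmissible_zero t

lemma Sop_le (hp : 0 < p) (hφ : IsPenalty p φ) (hμ : MemPp p μ) {x : Ed d} {B : ℝ}
    (h : ∀ ν c, MemPp p ν → IsAdmissible φ t (Wp p μ ν) c → (∫ y, f (x + y) ∂ν) - c ≤ B) :
    Sop p φ μ t f x ≤ B := by
  obtain ⟨hzero, hself⟩ := hφ.isAdmissible_Wp_self hp μ t
  refine csSup_le ⟨_, μ, hμ, 0, hzero, hself, rfl⟩ ?_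
  rintro _ ⟨ν, hν, c, hc₀, hc, rfl⟩
  exact h ν c hν ⟨hc₀, hc⟩

lemma integral_le_Sop (hp : 0 < p) (hφ : IsPenalty p φ) (hμ : MemPp p μ) (hf : IsBUC f)
    (x : Ed d) : ∫ y, f (x + y) ∂μ ≤ Sop p φ μ t f x := by
  simpa only [sub_zero] using le_Sop hf hμ (hφ.isAdmissible_Wp_self hp μ t) x

lemma isConvexExpectation_Sop (hp : 0 < p) (hφ : IsPenalty p φ) (hμ : MemPp p μ) (t : ℝ) :
    IsConvexExpectation (Sop p φ μ t) where
  le_add_const hf hg h x := Sop_le hp hφ hμ fun ν c hν hc => by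
    have := hν.1
    linarith [(IsConvexExpectation.of_integral ν).le_add_const hf hg h x, le_Sop hg hν hc x]
  map_zero := by
    ext x
    refine le_antisymm (Sop_le hp hφ hμ fun ν c _ hc => ?_) ?_
    · simpa only [integral_zero, zero_sub, neg_nonpos] using hc.1
    · simpa only [integral_zero] using integral_le_Sop (t := t) hp hφ hμ (IsBUC.const 0) x
  map_translate _ h := by
    ext x
    simp only [Sop, add_right_comm]
  convex {f g} hf hg {l} hl₀ hl₁ x := Sop_le hp hφ hμ fun ν c hν hc => by
    have := hν.1
    have : 0 ≤ 1 - l := sub_nonneg.2 hl₁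
    have hconv := (IsConvexExpectation.of_integral ν).convex hf hg hl₀ hl₁ x
    calc _ ≤ l * ((∫ y, f (x + y) ∂ν) - c) + (1 - l) * ((∫ y, g (x + y) ∂ν) - c) := by linarith
      _ ≤ l * Sop p φ μ t f x + (1 - l) * Sop p φ μ t g x := by
          gcongr
          · exact le_Sop hf hν hc x
          · exact le_Sop hg hν hc x

-- The penalty pays for the transport cost in the duality bound.
lemma Sop_le_integral_add (hp : 1 ≤ p) (hφ : IsPenalty p φ) (hμ : MemPp p μ) (hf : IsBUC f)
    {u : Ed d → ℝ} {K b : ℝ} (hK : 0 ≤ K) (hfu : ∀ x y, f y ≤ u x + K * ‖y - x‖ ^ p)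
    (hgrowth : ∀ w c, 0 ≤ w → IsAdmissible φ t w c → K * w ^ p ≤ c + b) {x : Ed d}
    (hu : Integrable (fun y => u (x + y)) μ) :
    Sop p φ μ t f x ≤ (∫ y, u (x + y) ∂μ) + b := by
  refine Sop_le (by positivity) hφ hμ fun ν c hν hc => ?_
  have := hν.1
  have hdual := integral_le_integral_add_Wp_rpow hp hμ hν hK (hf.integrable_comp_add ν x) hu
    fun y z => by simpa only [add_sub_add_left_eq_sub] using hfu (x + y) (x + z)
  linarith [hgrowth _ _ (Wp_nonneg p μ ν) hc]

lemma Sop_dirac_zero (hp : 1 ≤ p) (hφ : IsPenalty p φ) (hf : IsBUC f) :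
    Sop p φ (Measure.dirac 0) 0 f = f := by
  have hp₀ : 0 < p := by positivity
  ext x
  refine le_antisymm (le_of_forall_pos_le_add fun ε hε => ?_) ?_
  · obtain ⟨K, hK, hfK⟩ := hf.exists_le_add_norm_sub_rpow hp₀.le hε
    have hgrowth : ∀ w c, 0 ≤ w → IsAdmissible φ 0 w c → K * w ^ p ≤ c + 0 := by
      rintro w c hw ⟨hc, hwc⟩
      have hw₀ : w.toNNReal = 0 := by
        by_contra hne
        simp [phit, hne] at hwc
      rw [le_antisymm (Real.toNNReal_eq_zero.1 hw₀) hw, Real.zero_rpow hp₀.ne', mul_zero, add_zero]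
      exact hc
    have hle := Sop_le_integral_add hp hφ (memPp_dirac_zero hp₀) hf hK hfK hgrowth (x := x)
      ((hf.add (IsBUC.const ε)).integrable_comp_add _ x)
    simpa only [integral_dirac, add_zero] using hle
  · simpa only [integral_dirac, add_zero] using
      integral_le_Sop (t := 0) hp₀ hφ (memPp_dirac_zero hp₀) hf x

/-! ### Behaviour for small times -/

lemma eventually_integral_le_add (hp : 1 ≤ p) {μ : ℝ → Measure (Ed d)}
    (hμ : ∀ t, 0 < t → MemPp p (μ t)) (hμ₀ : WContinuousAtZero p μ) (hf : IsBUC f) {ε : ℝ}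
    (hε : 0 < ε) : ∀ᶠ t in 𝓝[>] 0, ∀ x, ∫ y, f (x + y) ∂μ t ≤ f x + ε := by
  have hp₀ : 0 < p := by positivity
  obtain ⟨K, hK, hfK⟩ := hf.exists_le_add_norm_sub_rpow hp₀.le (half_pos hε)
  have hlim : Tendsto (fun t => K * Wp p (μ t) (Measure.dirac 0) ^ p) (𝓝[>] 0) (𝓝 0) := by
    simpa only [Real.zero_rpow hp₀.ne', mul_zero] using
      (hμ₀.rpow_const (Or.inr hp₀.le)).const_mul K
  filter_upwards [hlim.eventually_le_const (half_pos hε), self_mem_nhdsWithin] with t ht ht₀ x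
  have := (hμ t ht₀).1
  have hdual := integral_le_integral_add_Wp_rpow hp (hμ t ht₀) (memPp_dirac_zero hp₀) hK
    (f := fun y => -f (x + y)) (u := fun y => -f (x + y) + ε / 2)
    (hf.neg.integrable_comp_add _ x) ((hf.neg.add (IsBUC.const (ε / 2))).integrable_comp_add _ x)
    fun y z => by
      have hzy := hfK (x + z) (x + y)
      rw [add_sub_add_left_eq_sub, norm_sub_rev] at hzy
      linarith
  rw [integral_dirac, add_zero, integral_add (hf.neg.integrable_comp_add _ x) (integrable_const _),
    integral_neg, integral_const, probReal_univ, one_smul] at hdual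
  linarith

lemma eventually_Sop_le_integral_add (hp : 1 < p) (hφ : IsPenalty p φ) {μ : ℝ → Measure (Ed d)}
    (hμ : ∀ t, 0 < t → MemPp p (μ t)) (hf : IsBUC f) {ε : ℝ} (hε : 0 < ε) :
    ∀ᶠ t in 𝓝[>] 0, ∀ x, Sop p φ (μ t) t f x ≤ (∫ y, f (x + y) ∂μ t) + ε := by
  have hp₀ : 0 < p := by positivity
  obtain ⟨K, hK, hfK⟩ := hf.exists_le_add_norm_sub_rpow hp₀.le (half_pos hε)
  obtain ⟨a, b, -, -, hgrowth⟩ := hφ.exists_rpow_le hp₀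
  have hlim {q : ℝ} (hq : 0 < q) (k : ℝ) : Tendsto (fun t => k * t ^ q) (𝓝[>] 0) (𝓝 0) := by
    have hcont : Continuous fun t : ℝ => k * t ^ q :=
      continuous_const.mul (continuous_id.rpow_const fun _ => Or.inr hq.le)
    simpa only [Real.zero_rpow hq.ne', mul_zero] using
      (hcont.tendsto 0).mono_left nhdsWithin_le_nhds
  filter_upwards [(hlim (sub_pos.2 hp) (K * a)).eventually_le_const one_pos,
    (hlim hp₀ (K * b)).eventually_le_const (half_pos hε), self_mem_nhdsWithin] with t hta htb ht x
  have := (hμ t ht).1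
  have hle := Sop_le_integral_add hp.le hφ (hμ t ht) hf hK hfK (b := ε / 2) (x := x)
    (fun w c hw hc => by
      calc K * w ^ p ≤ K * (a * t ^ (p - 1) * c + b * t ^ p) := by
            gcongr
            exact hgrowth t w c ht hw hc
        _ = K * a * t ^ (p - 1) * c + K * b * t ^ p := by ring
        _ ≤ c + ε / 2 := add_le_add (mul_le_of_le_one_left hc.1 hta) htb)
    ((hf.add (IsBUC.const (ε / 2))).integrable_comp_add _ x)
  rw [integral_add (hf.integrable_comp_add _ x) (integrable_const _), integral_const,
    probReal_univ, one_smul] at hle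
  linarith

lemma eventually_Sop_le_add (hp : 1 < p) (hφ : IsPenalty p φ) {μ : ℝ → Measure (Ed d)}
    (hμ : ∀ t, 0 < t → MemPp p (μ t)) (hμ₀ : WContinuousAtZero p μ) (hf : IsBUC f) {ε : ℝ}
    (hε : 0 < ε) : ∀ᶠ t in 𝓝[>] 0, ∀ x, Sop p φ (μ t) t f x ≤ f x + ε := by
  filter_upwards [eventually_Sop_le_integral_add hp hφ hμ hf (half_pos hε),
    eventually_integral_le_add hp.le hμ hμ₀ hf (half_pos hε)] with t hSop hint x
  linarith [hSop x, hint x]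

/-! ### Vanishing at infinity -/

lemma exists_le_indicator_add_norm_sub_rpow {E : Type*} [NormedAddCommGroup E] [ProperSpace E]
    {f : E → ℝ} (hf : IsBUC f) (hf₀ : Tendsto f (cocompact E) (𝓝 0)) (hp : 0 < p) {K ε : ℝ}
    (hK : 0 < K) (hε : 0 < ε) :
    ∃ (C : Set E) (M : ℝ), IsCompact C ∧
      ∀ x y, f y ≤ C.indicator (fun _ => M) x + ε + K * ‖y - x‖ ^ p := by
  obtain ⟨M, hM⟩ := hf.bounded
  have hM₀ : 0 ≤ M := (abs_nonneg _).trans (hM 0)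
  obtain ⟨C, hC, hCε⟩ := mem_cocompact.1 (hf₀.eventually_le_const hε)
  have hr : K * ((M / K) ^ p⁻¹) ^ p = M := by
    rw [Real.rpow_inv_rpow (by positivity) hp.ne', mul_div_cancel₀ _ hK.ne']
  refine ⟨Metric.cthickening ((M / K) ^ p⁻¹) C, M, hC.cthickening, fun x y => ?_⟩
  have hind : 0 ≤ (Metric.cthickening ((M / K) ^ p⁻¹) C).indicator (fun _ => M) x :=
    indicator_nonneg (fun _ _ => hM₀) x
  have hcost : 0 ≤ K * ‖y - x‖ ^ p := by positivity
  by_cases hy : y ∈ C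
  · by_cases hx : x ∈ Metric.cthickening ((M / K) ^ p⁻¹) C
    · rw [indicator_of_mem hx]
      linarith [le_of_abs_le (hM y)]
    · have hfar : (M / K) ^ p⁻¹ ≤ ‖y - x‖ := by
        rw [← dist_eq_norm, dist_comm]
        exact le_of_not_ge fun h => hx (Metric.mem_cthickening_of_dist_le x y _ C hy h)
      have hMcost : M ≤ K * ‖y - x‖ ^ p := by
        rw [← hr]
        gcongr
      linarith [le_of_abs_le (hM y)]
  · have hyε : f y ≤ ε := hCε hy
    linarith

lemma tendsto_integral_comp_add_cocompact {E : Type*} [NormedAddCommGroup E] [ProperSpace E]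
    [MeasurableSpace E] [BorelSpace E] (μ : Measure E) [IsFiniteMeasure μ] {g : E → ℝ} {M : ℝ}
    (hg : Measurable g) (hgM : ∀ x, ‖g x‖ ≤ M) (hg₀ : Tendsto g (cocompact E) (𝓝 0)) :
    Tendsto (fun x => ∫ y, g (x + y) ∂μ) (cocompact E) (𝓝 0) := by
  have : (cocompact E).IsCountablyGenerated := by
    rw [← Metric.cobounded_eq_cocompact, ← comap_norm_atTop]
    infer_instance
  rw [← integral_zero E ℝ (μ := μ)]
  refine tendsto_integral_filter_of_dominated_convergence (fun _ => M)
    (Eventually.of_forall fun x => (hg.comp (measurable_const_add x)).aestronglyMeasurable)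
    (Eventually.of_forall fun x => Eventually.of_forall fun y => hgM _) (integrable_const M)
    (Eventually.of_forall fun y => ?_)
  exact hg₀.comp (Homeomorph.addRight y).isClosedEmbedding.tendsto_cocompact

lemma eventually_Sop_le_of_tendsto_cocompact (hp : 1 ≤ p) (hφ : IsPenalty p φ) (hμ : MemPp p μ)
    (ht : 0 < t) (hf : IsBUC f) (hf₀ : Tendsto f (cocompact (Ed d)) (𝓝 0)) {ε : ℝ} (hε : 0 < ε) :
    ∀ᶠ x in cocompact (Ed d), Sop p φ μ t f x ≤ ε := by
  have hp₀ : 0 < p := by positivity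
  have := hμ.1
  have hε₃ : 0 < ε / 3 := by positivity
  obtain ⟨K, hK, hgrowth⟩ := hφ.exists_pos_mul_rpow_le_add hp₀ ht hε₃
  obtain ⟨C, M, hC, hfC⟩ := exists_le_indicator_add_norm_sub_rpow hf hf₀ hp₀ hK hε₃
  have hind : Measurable (C.indicator fun _ => M) := measurable_const.indicator hC.measurableSet
  have hindM : ∀ x, ‖C.indicator (fun _ => M) x‖ ≤ ‖M‖ := fun x => norm_indicator_le_norm_self _ x
  have hind_int (x : Ed d) : Integrable (fun y => C.indicator (fun _ => M) (x + y)) μ :=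
    Integrable.of_bound (hind.comp (measurable_const_add x)).aestronglyMeasurable ‖M‖
      (Eventually.of_forall fun y => hindM _)
  have hind₀ : Tendsto (C.indicator fun _ => M) (cocompact (Ed d)) (𝓝 0) :=
    tendsto_nhds_of_eventually_eq <| mem_of_superset hC.compl_mem_cocompact
      fun x hx => indicator_of_notMem hx _
  filter_upwards [(tendsto_integral_comp_add_cocompact μ hind hindM hind₀).eventually_le_const hε₃]
    with x hx
  have hle := Sop_le_integral_add hp hφ hμ hf hK.le hfC hgrowth
    ((hind_int x).add (integrable_const _))
  rw [integral_add (hind_int x) (integrable_const _), integral_const, probReal_univ,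
    one_smul] at hle
  linarith

lemma tendsto_Sop_cocompact (hp : 1 ≤ p) (hφ : IsPenalty p φ) (hμ : MemPp p μ) (ht : 0 < t)
    (hf : IsBUC f) (hf₀ : Tendsto f (cocompact (Ed d)) (𝓝 0)) :
    Tendsto (Sop p φ μ t f) (cocompact (Ed d)) (𝓝 0) := by
  refine Metric.tendsto_nhds.2 fun ε hε => ?_
  have hneg₀ : Tendsto (fun x => -f x) (cocompact (Ed d)) (𝓝 0) := by
    simpa only [neg_zero] using hf₀.neg
  filter_upwards [eventually_Sop_le_of_tendsto_cocompact hp hφ hμ ht hf hf₀ (half_pos hε),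
    eventually_Sop_le_of_tendsto_cocompact hp hφ hμ ht hf.neg hneg₀ (half_pos hε)] with x hx hnx
  have hlower := (isConvexExpectation_Sop (by positivity) hφ hμ t).neg_map_neg_le hf x
  rw [Real.dist_eq, sub_zero, abs_lt]
  constructor <;> linarith

end OneStep

/-! ### Composition of one-step operators -/

section Composition

variable {d : ℕ} {p s t : ℝ} {φ : ℝ≥0 → ℝ≥0∞} {f : Ed d → ℝ}

lemma exists_measurable_dist_lt (X : Type*) [PseudoMetricSpace X]
    [TopologicalSpace.SeparableSpace X] [Nonempty X] [MeasurableSpace X] [OpensMeasurableSpace X]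
    {δ : ℝ} (hδ : 0 < δ) :
    ∃ (u : ℕ → X) (ι : X → ℕ), Measurable ι ∧ ∀ x, dist x (u (ι x)) < δ := by
  classical
  have hclose (x : X) : ∃ n, dist x (TopologicalSpace.denseSeq X n) < δ :=
    (TopologicalSpace.denseRange_denseSeq X).exists_dist_lt x hδ
  exact ⟨TopologicalSpace.denseSeq X, fun x => Nat.find (hclose x),
    measurable_find hclose fun n => measurableSet_lt (by fun_prop) measurable_const,
    fun x => Nat.find_spec (hclose x)⟩

lemma integrable_comp_index {X : Type*} [MeasurableSpace X] (P : Measure X) [IsFiniteMeasure P]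
    {ι : X → ℕ} (hι : Measurable ι) {c : ℕ → ℝ} {C : ℝ} (hc₀ : ∀ n, 0 ≤ c n) (hc : ∀ n, c n ≤ C) :
    Integrable (fun x => c (ι x)) P :=
  Integrable.of_bound (measurable_from_nat.comp hι).aestronglyMeasurable C
    (Eventually.of_forall fun _ => (Real.norm_of_nonneg (hc₀ _)).trans_le (hc _))

lemma exists_lt_integral_sub {μ : Measure (Ed d)} (hp : 0 < p) (hφ : IsPenalty p φ)
    (hμ : MemPp p μ) {x : Ed d} {B : ℝ} (hB : B < Sop p φ μ t f x) :
    ∃ ν c, MemPp p ν ∧ IsAdmissible φ t (Wp p μ ν) c ∧ B < (∫ y, f (x + y) ∂ν) - c := by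
  by_contra! hle
  exact hB.not_ge (Sop_le hp hφ hμ hle)

lemma exists_measurable_selection_Sop {μ : Measure (Ed d)} (hp : 0 < p) (hφ : IsPenalty p φ)
    (hμ : MemPp p μ) (hf : IsBUC f) {ε : ℝ} (hε : 0 < ε) :
    ∃ (ν : ℕ → Measure (Ed d)) (c : ℕ → ℝ) (C : ℝ) (ι : Ed d → ℕ), Measurable ι ∧
      (∀ n, MemPp p (ν n)) ∧ (∀ n, IsAdmissible φ t (Wp p μ (ν n)) (c n)) ∧ (∀ n, c n ≤ C) ∧
      ∀ x, Sop p φ μ t f x ≤ (∫ y, f (x + y) ∂ν (ι x)) - c (ι x) + ε := by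
  have hS := isConvexExpectation_Sop hp hφ hμ t
  have hε₃ : 0 < ε / 3 := by positivity
  obtain ⟨M, hM⟩ := hf.bounded
  obtain ⟨δ, hδ, hmod⟩ := hf.exists_modulus hε₃
  obtain ⟨u, ι, hι, hu⟩ := exists_measurable_dist_lt (Ed d) hδ
  choose ν c hν hc hopt using fun n =>
    exists_lt_integral_sub hp hφ hμ (sub_lt_self (Sop p φ μ t f (u n)) hε₃)
  refine ⟨ν, c, 2 * M + ε / 3, ι, hι, hν, hc, fun n => ?_, fun x => ?_⟩
  · have := (hν n).1
    linarith [hopt n, neg_le_of_abs_le (hS.abs_le hf hM (u n)),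
      le_of_abs_le ((IsConvexExpectation.of_integral (ν n)).abs_le hf hM (u n))]
  · have := (hν (ι x)).1
    have hux : ‖x - u (ι x)‖ < δ := by simpa only [dist_eq_norm] using hu x
    have hSop := le_of_abs_le (hS.abs_map_sub_le hf hmod hux)
    have hint := neg_le_of_abs_le
      ((IsConvexExpectation.of_integral (ν (ι x))).abs_map_sub_le hf hmod hux)
    linarith [hopt (ι x)]

variable {μ₁ μ₂ : Measure (Ed d)}

lemma IsPenalty.isAdmissible_kernelConv (hφ : IsPenalty p φ) (hp : 1 ≤ p) (hμ₁ : MemPp p μ₁)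
    (hμ₂ : MemPp p μ₂) (hs : 0 < s) (ht : 0 < t) {ν₁ : Measure (Ed d)} {c₁ : ℝ}
    (hν₁ : MemPp p ν₁) (hc₁ : IsAdmissible φ s (Wp p μ₁ ν₁) c₁) {ν₂ : ℕ → Measure (Ed d)}
    {c₂ : ℕ → ℝ} {C : ℝ} (hν₂ : ∀ n, MemPp p (ν₂ n))
    (hc₂ : ∀ n, IsAdmissible φ t (Wp p μ₂ (ν₂ n)) (c₂ n)) (hC : ∀ n, c₂ n ≤ C) {ι : Ed d → ℕ}
    (hι : Measurable ι) :
    MemPp p (kernelConv ν₁ (selectionKernel ν₂ ι hι)) ∧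
      IsAdmissible φ (s + t) (Wp p (μ₁.conv μ₂) (kernelConv ν₁ (selectionKernel ν₂ ι hι)))
        (c₁ + ∫ y, c₂ (ι y) ∂ν₁) := by
  have hp₀ : 0 < p := by positivity
  have := hν₁.1
  have hWp₀ (n : ℕ) : 0 ≤ Wp p μ₂ (ν₂ n) ^ p := Real.rpow_nonneg (Wp_nonneg p μ₂ (ν₂ n)) p
  obtain ⟨a, b, ha, -, hgrowth⟩ := hφ.exists_rpow_le hp₀
  have hWp (n : ℕ) : Wp p μ₂ (ν₂ n) ^ p ≤ a * t ^ (p - 1) * C + b * t ^ p := by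
    refine (hgrowth t _ _ ht (Wp_nonneg p μ₂ (ν₂ n)) (hc₂ n)).trans ?_
    gcongr
    exact hC n
  have hWp_int := integrable_comp_index ν₁ hι hWp₀ hWp
  have hc_int := integrable_comp_index ν₁ hι (fun n => (hc₂ n).1) hC
  have hmean := hφ.isAdmissible_integral_rpow hp₀ ht (fun y => Wp_nonneg p μ₂ (ν₂ (ι y)))
    (fun y => hc₂ (ι y)) hWp_int hc_int
  have hmean₀ : 0 ≤ (∫ y, Wp p μ₂ (ν₂ (ι y)) ^ p ∂ν₁) ^ (1 / p) :=
    Real.rpow_nonneg (integral_nonneg fun y => hWp₀ (ι y)) _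
  exact ⟨memPp_kernelConv hp hμ₁ hμ₂ hν₁ hν₂ hWp_int,
    hφ.isAdmissible_mono (add_pos hs ht) (Wp_kernelConv_le hp hμ₁ hμ₂ hν₁ hν₂ hWp_int)
      (hφ.isAdmissible_add hs ht (Wp_nonneg p μ₁ ν₁) hmean₀ hc₁ hmean)⟩

-- A measurable choice of near-optimizers for the inner problem glues with an optimizer of the
-- outer one to a competitor for the problem on `[0, s + t]`.
lemma Sop_Sop_le (hp : 1 ≤ p) (hφ : IsPenalty p φ) (hμ₁ : MemPp p μ₁) (hμ₂ : MemPp p μ₂)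
    (hs : 0 < s) (ht : 0 < t) (hf : IsBUC f) (x : Ed d) :
    Sop p φ μ₁ s (Sop p φ μ₂ t f) x ≤ Sop p φ (μ₁.conv μ₂) (s + t) f x := by
  have hp₀ : 0 < p := by positivity
  refine Sop_le hp₀ hφ hμ₁ fun ν₁ c₁ hν₁ hc₁ => le_of_forall_pos_le_add fun ε hε => ?_
  obtain ⟨ν₂, c₂, C, ι, hι, hν₂, hc₂, hC, hopt⟩ :=
    exists_measurable_selection_Sop (t := t) hp₀ hφ hμ₂ hf hε
  have hιx : Measurable fun y => ι (x + y) := hι.comp (measurable_const_add x)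
  have := hν₁.1
  have := isMarkovKernel_selectionKernel (fun n => (hν₂ n).1) hιx
  obtain ⟨hmem, hadm⟩ := hφ.isAdmissible_kernelConv hp hμ₁ hμ₂ hs ht hν₁ hc₁ hν₂ hc₂ hC hιx
  have := hmem.1
  obtain ⟨hinner, hglue⟩ := integral_kernelConv (hf.integrable_comp_add
    (kernelConv ν₁ (selectionKernel ν₂ _ hιx)) x)
  have hc_int := integrable_comp_index ν₁ hιx (fun n => (hc₂ n).1) hC
  have hS_int := ((isConvexExpectation_Sop hp₀ hφ hμ₂ t).isBUC hf).integrable_comp_add ν₁ x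
  have hmono : ∫ y, (Sop p φ μ₂ t f (x + y) + c₂ (ι (x + y))) ∂ν₁ ≤
      ∫ y, ((∫ z, f (x + (y + z)) ∂selectionKernel ν₂ _ hιx y) + ε) ∂ν₁ := by
    refine integral_mono (hS_int.add hc_int) (hinner.add (integrable_const ε)) fun y => ?_
    have hoptxy := hopt (x + y)
    simp only [add_assoc] at hoptxy
    change _ ≤ (∫ z, f (x + (y + z)) ∂ν₂ (ι (x + y))) + ε
    linarith
  rw [integral_add hS_int hc_int, integral_add hinner (integrable_const ε), integral_const,
    probReal_univ, one_smul, ← hglue] at hmono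
  linarith [le_Sop hf hmem hadm x]

lemma isChernoffFamily_Sop (hp : 1 < p) (hφ : IsPenalty p φ) {μ : ℝ → Measure (Ed d)}
    (hμ : IsConvSemigroup p μ) (hμ₀ : WContinuousAtZero p μ) :
    IsChernoffFamily fun t => Sop p φ (μ t) t := by
  obtain ⟨hzero, hconv, hmem⟩ := hμ
  have hSop_zero {f : Ed d → ℝ} (hf : IsBUC f) : Sop p φ (μ 0) 0 f = f := by
    rw [hzero, Sop_dirac_zero hp.le hφ hf]
  have hexp {t : ℝ} (ht : 0 ≤ t) : IsConvexExpectation (Sop p φ (μ t) t) :=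
    isConvexExpectation_Sop (by positivity) hφ (hmem t ht) t
  refine ⟨hexp, hSop_zero, fun {s t f} hs ht hf x => ?_, fun {t f} ht hf hf₀ => ?_,
    fun hf hε => eventually_Sop_le_add hp hφ (fun t ht => hmem t ht.le) hμ₀ hf hε⟩
  · rcases hs.eq_or_lt with rfl | hs'
    · rw [hSop_zero ((hexp ht).isBUC hf), zero_add]
    rcases ht.eq_or_lt with rfl | ht'
    · rw [hSop_zero hf, add_zero]
    rw [hconv s t hs ht]
    exact Sop_Sop_le hp.le hφ (hmem s hs) (hmem t ht) hs' ht' hf x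
  · rcases ht.eq_or_lt with rfl | ht'
    · rwa [hSop_zero hf]
    · exact tendsto_Sop_cocompact hp.le hφ (hmem t ht) ht' hf hf₀

end Composition

/-- `(𝒮(t))_{t≥0}` is a strongly continuous, convex, monotone, normalized
contraction semigroup on `C₀(ℝ^d)`. -/
theorem stmt_2 (d : ℕ) (hd : 1 ≤ d) (p : ℝ) (hp : 1 < p)
    (φ : ℝ≥0 → ℝ≥0∞) (hφ : IsPenalty p φ)
    (μ : ℝ → Measure (Ed d)) (hμ : IsConvSemigroup p μ) (hμ0 : WContinuousAtZero p μ)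
    (s t : ℝ) (hs : 0 ≤ s) (ht : 0 ≤ t) (f g : C₀(Ed d, ℝ)) :
    -- (i) `𝒮(t)` maps `C₀(ℝ^d)` to itself, is normalized, monotone, contractive, convex
    IsC0 (Slim p φ μ t (⇑f)) ∧
    (∀ x, Slim p φ μ t (fun _ => (0:ℝ)) x = 0) ∧
    ((∀ x, f x ≤ g x) → ∀ x, Slim p φ μ t (⇑f) x ≤ Slim p φ μ t (⇑g) x) ∧
    (∀ x, |Slim p φ μ t (⇑f) x - Slim p φ μ t (⇑g) x| ≤ ‖f - g‖) ∧
    (∀ l : ℝ, 0 ≤ l → l ≤ 1 → ∀ x,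
      Slim p φ μ t (fun y => l * f y + (1 - l) * g y) x ≤
        l * Slim p φ μ t (⇑f) x + (1 - l) * Slim p φ μ t (⇑g) x) ∧
    -- (ii) `𝒮(0)f = f`
    (∀ x, Slim p φ μ 0 (⇑f) x = f x) ∧
    -- (iii) `𝒮(t)(𝒮(s)f) = 𝒮(t+s)f`
    (∀ x, Slim p φ μ t (Slim p φ μ s (⇑f)) x = Slim p φ μ (t + s) (⇑f) x) ∧
    -- (iv) strong continuity: `lim_{r↓0} ‖𝒮(r)f − f‖_∞ = 0`
    TendstoUniformly (fun r x => Slim p φ μ r (⇑f) x) (⇑f) (𝓝[>] (0:ℝ)) := by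
  have hA := isChernoffFamily_Sop hp hφ hμ hμ0
  have hf := IsBUC.of_zeroAtInfty f
  have hg := IsBUC.of_zeroAtInfty g
  have hf₀ := zero_at_infty f
  have hT : IsConvexExpectation (Slim p φ μ t) := hA.isConvexExpectation_dyadicLimit ht
  refine ⟨⟨(hT.isBUC hf).continuous, hA.tendsto_cocompact_dyadicLimit ht hf hf₀⟩,
    congrFun hT.map_zero, hT.mono hf hg, hT.abs_sub_le hf hg fun x => ?_,
    fun l hl₀ hl₁ => hT.convex hf hg hl₀ hl₁, congrFun (hA.dyadicLimit_zero hf),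
    congrFun (hA.dyadicLimit_dyadicLimit hf hf₀ ht hs), hA.tendstoUniformly_dyadicLimit hf⟩
  exact (f - g).toBCF.norm_coe_le_norm x
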